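/- (Watson, modulus powers of 7) For every positive integer k and every natural number n, if 24n ≡ 1 (mod 7^(2k−1)) then p(n) ≡ 0 (mod 7^k). -/

import Mathlib

/-!
Let `E(q) = ∏ (1 - q^n)`, let `P = 1 / E` be the generating function of the partition numbers, and let
`U` be the operator `∑ aₙ qⁿ ↦ ∑ a₇ₙ qⁿ`. The proof is Watson's: the generating functions of `p` along
the classes `24⁻¹` modulo powers of 7 arise by iterating `U`, and their divisibility follows from the
action of `U` on polynomials in `Y₁ = q (E(q⁷) / E(q))⁴`. Everything is done with formal power series
over `ℤ`, and over `ℂ` where roots of unity enter.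

*Dissection.* By the pentagonal number theorem, `E = a + b + c - D` where `a`, `b`, `c` collect the
exponents `0`, `1`, `5` modulo 7 and `D = q² E(q⁴⁹)` (`E_eq`). Jacobi's identity
`E³ = ∑ (-1)^k (2k+1) q^{k(k+1)/2}`, obtained from a finite triple product (`X_pow_dvd_E_cube_sub`),
shows that `E³` has no exponents in the classes `2`, `4`, `5` and that its part in the class `6` is
`-7 D³`. This gives four polynomial relations between `a`, `b`, `c`, `D` (`rel0` to `rel3`).

*Modular equation.* In the ideal of these relations, `E`, `D` and
`t = -(a³b + b³c + c³a) - 8D⁴` satisfy an equation of degree 7 in `E` (`modular_eq`). The substitutions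
`q ↦ ωq` with `ω⁷ = 1` produce its seven roots, and comparing their product with
`∏ E(ωq) = E(q⁷)⁸ / E(q⁴⁹)` gives `t = q E(q⁷)⁴` (`tt_eq`).

*The action of `U`.* Put `X₁ = q² E(q⁴⁹) / E(q)` and `Y = Y₁(q⁷)`, so that `X₁⁴ = Y Y₁`. Since `U` is
linear over power series in `q⁷`, the modular equation becomes a linear recurrence of order 7, with
coefficients in `ℤ[Y₁]`, for `U (Y² X₁^{s-6})` (`U_W_add`). Its seven initial values are read off from
the components of `E⁰, …, E⁶`. An induction on `s` bounds the powers of 7 in the resulting polynomials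
in `Y₁` from below (`U_W_mem`).

*Iteration.* It follows that `U` and `f ↦ U (X₁ f)` map explicit lattices of polynomials in `Y₁` into
each other, and that a composite of the two gains a factor 7 (`U_mem_EvenLat`,
`U_X1_mul_mem_OddLat`). Applied to `E(q⁷) ∑ p(7m - 2) q^m = U X₁`, this yields the theorem.
-/

/-- `p n` is the number of partitions of `n`. -/
def partitionCount (n : ℕ) : ℕ := Fintype.card (Nat.Partition n)

namespace Watson

open PowerSeries

set_option linter.unusedSimpArgs false

/-! ### Finite triple product and Jacobi's identity -/

/-- The finite Euler product `∏_{i=1}^n (1 - q^i)`; the power series variable `X` plays the role of `q`. -/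
noncomputable def G (n : ℕ) : ℤ⟦X⟧ := ∏ i ∈ Finset.range n, (1 - X ^ (i + 1))

/-- The Euler product `∏_{i ≥ 1} (1 - q^i)`, encoded as the pentagonal series
`∑ₖ (-1)^k q^{k(3k-1)/2}`. The exponents of this sum are what the dissection modulo 7 needs. -/
noncomputable def E : ℤ⟦X⟧ := pentagonalSeries ℤ

/-- The inverse of `G n`. -/
noncomputable def iG (n : ℕ) : ℤ⟦X⟧ := invOfUnit (G n) 1

lemma G_succ (n : ℕ) : G (n + 1) = G n * (1 - X ^ (n + 1)) := Finset.prod_range_succ _ _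

lemma constantCoeff_G (n : ℕ) : constantCoeff (G n) = 1 := by
  simp [G, map_prod]

lemma G_mul_iG (n : ℕ) : G n * iG n = 1 :=
  mul_invOfUnit _ _ (by simp [constantCoeff_G])

/-- The Gaussian binomial coefficient as a power series in `q`, equal to `0` for `m > N`. -/
noncomputable def qbinom (N m : ℕ) : ℤ⟦X⟧ := if m ≤ N then G N * iG m * iG (N - m) else 0

lemma G_ne_zero (n : ℕ) : G n ≠ 0 := left_ne_zero_of_mul_eq_one (G_mul_iG n)

lemma qbinom_mul {N m : ℕ} (h : m ≤ N) : qbinom N m * (G m * G (N - m)) = G N := by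
  rw [qbinom, if_pos h]
  linear_combination (G N * iG (N-m) * G (N-m)) * G_mul_iG m + G N * G_mul_iG (N - m)

lemma qbinom_of_lt {N m : ℕ} (h : N < m) : qbinom N m = 0 := if_neg (by omega)

lemma qbinom_zero (N : ℕ) : qbinom N 0 = 1 := by
  have := qbinom_mul (Nat.zero_le N)
  rw [show G 0 = 1 by simp [G], one_mul, Nat.sub_zero] at this
  exact mul_right_cancel₀ (G_ne_zero N) (by rw [this, one_mul])

lemma qbinom_self (N : ℕ) : qbinom N N = 1 := by
  have := qbinom_mul (le_refl N)
  rw [Nat.sub_self, show G 0 = 1 by simp [G], mul_one] at this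
  exact mul_right_cancel₀ (G_ne_zero N) (by rw [this, one_mul])

lemma qbinom_symm {N m : ℕ} (h : m ≤ N) : qbinom N (N - m) = qbinom N m := by
  rw [qbinom, qbinom, if_pos h, if_pos (Nat.sub_le _ _), Nat.sub_sub_self h]; ring

/-- First `q`-Pascal rule. The upper argument is written `M + j + 1` so that the exponent `j` involves
no truncated subtraction. -/
lemma qbinom_succ (M j : ℕ) :
    qbinom (M + j + 1) (M + 1) = qbinom (M + j) (M + 1) + X ^ j * qbinom (M + j) M := by
  rcases j with _ | j
  · simp [qbinom_self, qbinom_of_lt]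
  · apply mul_right_cancel₀ (mul_ne_zero (G_ne_zero (M + 1)) (G_ne_zero (j + 1)))
    have h1 := qbinom_mul (N := M + (j + 1) + 1) (m := M + 1) (by omega)
    have h2 := qbinom_mul (N := M + (j + 1)) (m := M + 1) (by omega)
    have h3 := qbinom_mul (N := M + (j + 1)) (m := M) (by omega)
    rw [show M + (j + 1) + 1 - (M + 1) = j + 1 by omega] at h1
    rw [show M + (j + 1) - (M + 1) = j by omega] at h2
    rw [show M + (j + 1) - M = j + 1 by omega] at h3
    rw [h1, G_succ (M + (j + 1)), G_succ j, G_succ M]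
    rw [G_succ M] at h2
    rw [G_succ j] at h3
    linear_combination (-(1 - X ^ (j + 1))) * h2 - X ^ (j + 1) * (1 - X ^ (M + 1)) * h3

/-- Second `q`-Pascal rule, obtained from the first by symmetry. -/
lemma qbinom_succ' (N M : ℕ) :
    qbinom (N + 1) (M + 1) = qbinom N M + X ^ (M + 1) * qbinom N (M + 1) := by
  rcases lt_or_ge N M with h | h
  · simp [qbinom_of_lt h, qbinom_of_lt (show N + 1 < M + 1 by omega),
      qbinom_of_lt (show N < M + 1 by omega)]
  · obtain ⟨j, rfl⟩ := Nat.exists_eq_add_of_le h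
    rcases j with _ | j
    · simp [qbinom_self, qbinom_of_lt]
    · rw [← qbinom_symm (N := M + (j + 1) + 1) (m := M + 1) (by omega),
        ← qbinom_symm (N := M + (j + 1)) (m := M + 1) (by omega),
        ← qbinom_symm (N := M + (j + 1)) (m := M) (by omega)]
      have := qbinom_succ j (M + 1)
      rw [show M + (j + 1) + 1 - (M + 1) = j + 1 by omega,
        show M + (j + 1) - (M + 1) = j by omega,
        show M + (j + 1) - M = j + 1 by omega,
        show M + (j + 1) + 1 = j + (M + 1) + 1 by omega,
        show M + (j + 1) = j + (M + 1) by omega]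
      exact this

/-- `k (k - 1) / 2` as a natural number, for an arbitrary integer `k`. -/
def tri (k : ℤ) : ℕ := (k * (k - 1) / 2).toNat

lemma two_mul_tri (k : ℤ) : 2 * (tri k : ℤ) = k * (k - 1) := by
  have h0 : 0 ≤ k * (k - 1) := by
    rcases le_or_gt k 0 with h | h <;> nlinarith
  have h1 : Even (k * (k - 1)) := by
    have := Int.even_mul_succ_self (k - 1)
    rwa [sub_add_cancel, mul_comm] at this
  obtain ⟨r, hr⟩ := h1
  unfold tri
  rw [hr] at h0 ⊢
  omega

lemma tri_add {k l : ℤ} {i j : ℕ} (h : k * (k - 1) + 2 * i = l * (l - 1) + 2 * j) :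
    tri k + i = tri l + j := by
  have h1 := two_mul_tri k
  have h2 := two_mul_tri l
  zify
  linarith

/-- The finite form of the theta product in an auxiliary variable `z`:
`∏_{i=0}^{a-1} (1 - q^i z) · ∏_{i=1}^{b} (z - q^i)`. -/
noncomputable def jtp (a b : ℕ) : Polynomial ℤ⟦X⟧ :=
  (∏ i ∈ Finset.range a, (1 - Polynomial.C (X ^ i) * Polynomial.X)) *
    ∏ i ∈ Finset.range b, (Polynomial.X - Polynomial.C (X ^ (i + 1)))

lemma coeff_jtp_zero (a m : ℕ) :
    (jtp a 0).coeff m = (-1) ^ m * X ^ tri m * qbinom a m := by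
  induction a generalizing m with
  | zero =>
    rcases m with _ | m
    · simp [jtp, qbinom_zero, tri]
    · simp [jtp, qbinom_of_lt, Polynomial.coeff_one]
  | succ a ih =>
    have : jtp (a + 1) 0 = jtp a 0 - Polynomial.C (X ^ a) * (jtp a 0 * Polynomial.X) := by
      simp only [jtp, Finset.prod_range_succ]; ring
    rw [this]
    rcases m with _ | m
    · simp [ih, qbinom_zero, tri]
    · rw [Polynomial.coeff_sub, Polynomial.coeff_C_mul, Polynomial.coeff_mul_X, ih, ih]
      rcases lt_or_ge a m with h | h
      · simp [qbinom_of_lt h, qbinom_of_lt (show a + 1 < m + 1 by omega),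
          qbinom_of_lt (show a < m + 1 by omega)]
      · obtain ⟨j, rfl⟩ := Nat.exists_eq_add_of_le h
        have e : tri ((m + 1 : ℕ) : ℤ) + j = tri m + (m + j) :=
          tri_add (by push_cast; ring)
        rw [qbinom_succ]
        have e' : (X : ℤ⟦X⟧) ^ tri ((m + 1 : ℕ) : ℤ) * X ^ j = X ^ tri m * X ^ (m + j) := by
          rw [← pow_add, ← pow_add, e]
        linear_combination ((-1) ^ m * qbinom (m + j) m) * e'

/-- Finite Jacobi triple product: each `z`-coefficient of `jtp a b` is a signed power of `q` times a
Gaussian binomial coefficient. -/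
lemma coeff_jtp (a b m : ℕ) :
    (jtp a b).coeff m = (-1) ^ (m + b) * X ^ tri (m - b) * qbinom (a + b) m := by
  induction b generalizing m with
  | zero => simpa using coeff_jtp_zero a m
  | succ b ih =>
    have : jtp a (b + 1) = jtp a b * Polynomial.X - Polynomial.C (X ^ (b + 1)) * jtp a b := by
      simp only [jtp, Finset.prod_range_succ]; ring
    rw [this]
    rcases m with _ | m
    · have e : tri (((0 : ℕ) : ℤ) - (b + 1 : ℕ)) + 0 = tri (((0 : ℕ) : ℤ) - b) + (b + 1) :=
        tri_add (by push_cast; ring)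
      rw [add_zero] at e
      rw [e]
      rw [Polynomial.coeff_sub, Polynomial.coeff_C_mul, Polynomial.mul_coeff_zero, ih]
      simp [qbinom_zero]
      ring
    · rw [Polynomial.coeff_sub, Polynomial.coeff_C_mul, Polynomial.coeff_mul_X, ih, ih,
        show a + (b + 1) = a + b + 1 by ring, qbinom_succ']
      have e : tri (((m + 1 : ℕ) : ℤ) - b) + (b + 1) = tri (m - b) + (m + 1) :=
        tri_add (by push_cast; ring)
      have e' : (X : ℤ⟦X⟧) ^ tri (((m + 1 : ℕ) : ℤ) - b) * X ^ (b + 1)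
          = X ^ tri (m - b) * X ^ (m + 1) := by
        rw [← pow_add, ← pow_add, e]
      rw [show (((m + 1 : ℕ) : ℤ) - ((b + 1 : ℕ) : ℤ)) = m - b by push_cast; ring]
      linear_combination (-(-1) ^ (m + 1 + b) * qbinom (a + b) (m + 1)) * e'

/-- For `a = n + 1` and `b = n` the factor `1 - z` makes `jtp` vanish at `z = 1`, and the derivative
there is the product of the other factors. -/
lemma eval_derivative_jtp (n : ℕ) :
    (Polynomial.derivative (jtp (n + 1) n)).eval 1 = - G n ^ 2 := by
  have : jtp (n + 1) n = ((∏ i ∈ Finset.range n, (1 - Polynomial.C (X ^ (i + 1)) * Polynomial.X)) *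
    ∏ i ∈ Finset.range n, (Polynomial.X - Polynomial.C (X ^ (i + 1)))) * (1 - Polynomial.X) := by
    simp only [jtp, Finset.prod_range_succ']; simp; ring
  rw [this, Polynomial.derivative_mul]
  simp [Polynomial.eval_prod, G, sq]

/-- Finite form of Jacobi's identity for the cube of the Euler product: compute the derivative at
`z = 1` coefficientwise, pairing the exponents of `z` symmetrically about the middle. -/
lemma G_sq (n : ℕ) : G n ^ 2 = ∑ k ∈ Finset.range (n + 1),
    (-1) ^ k * (2 * (k : ℤ⟦X⟧) + 1) * X ^ (k * (k + 1) / 2) * qbinom (2 * n + 1) (n - k) := by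
  have h := eval_derivative_jtp n
  have hd : (Polynomial.derivative (jtp (n + 1) n)).natDegree < 2 * n + 1 := by
    refine lt_of_le_of_lt (b := 2 * n) ?_ (by omega)
    rw [Polynomial.natDegree_le_iff_coeff_eq_zero]
    intro N hN
    rw [Polynomial.coeff_derivative, coeff_jtp, qbinom_of_lt (by omega)]
    simp
  rw [Polynomial.eval_eq_sum_range' hd] at h
  simp only [Polynomial.coeff_derivative, one_pow, mul_one] at h
  have h2 : ∑ m ∈ Finset.range ((n + 1) + (n + 1)), (jtp (n + 1) n).coeff m * m = - G n ^ 2 := by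
    rw [show (n + 1) + (n + 1) = (2 * n + 1) + 1 by ring, Finset.sum_range_succ', ← h]
    simp
  rw [Finset.sum_range_add, ← Finset.sum_range_reflect, ← Finset.sum_add_distrib] at h2
  rw [← neg_eq_iff_eq_neg] at h2
  rw [← h2, ← Finset.sum_neg_distrib]
  refine Finset.sum_congr rfl fun k hk => ?_
  have hk : k ≤ n := by simpa [Nat.lt_succ_iff] using hk
  obtain ⟨j, rfl⟩ := Nat.exists_eq_add_of_le hk
  rw [coeff_jtp, coeff_jtp]
  have t1 : tri (((k + j + 1 - 1 - k : ℕ) : ℤ) - ((k + j : ℕ) : ℤ)) = k * (k + 1) / 2 := by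
    have h1 := two_mul_tri (((k + j + 1 - 1 - k : ℕ) : ℤ) - ((k + j : ℕ) : ℤ))
    rw [show k + j + 1 - 1 - k = j by omega] at *
    have : 2 * tri ((j : ℤ) - ((k + j : ℕ) : ℤ)) = k * (k + 1) := by
      zify; push_cast at h1 ⊢; rw [h1]; ring
    omega
  have t2 : tri (((k + j + 1 + k : ℕ) : ℤ) - ((k + j : ℕ) : ℤ)) = k * (k + 1) / 2 := by
    have h1 := two_mul_tri (((k + j + 1 + k : ℕ) : ℤ) - ((k + j : ℕ) : ℤ))
    have : 2 * tri (((k + j + 1 + k : ℕ) : ℤ) - ((k + j : ℕ) : ℤ)) = k * (k + 1) := by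
      zify; push_cast at h1 ⊢; rw [h1]; ring
    omega
  rw [t1, t2]
  have s : qbinom (k + j + 1 + (k + j)) (k + j + 1 + k) = qbinom (2 * (k + j) + 1) j := by
    rw [← qbinom_symm (N := 2 * (k + j) + 1) (m := j) (by omega)]
    congr 1 <;> omega
  rw [s, show k + j + 1 - 1 - k = j by omega, show k + j - k = j by omega,
    show k + j + 1 + (k + j) = 2 * (k + j) + 1 by ring]
  rw [show j + (k + j) = k + 2 * j by ring, show k + j + 1 + k + (k + j) = k + 2 * (k + j) + 1 by ring,
    pow_add _ k (2 * j), pow_succ, pow_add _ k (2 * (k + j)), pow_mul, pow_mul]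
  push_cast
  ring

lemma X_pow_dvd_prod_sub_one (M : ℕ) (s : Finset ℕ) (hs : ∀ i ∈ s, M ≤ i) :
    (X : ℤ⟦X⟧) ^ (M + 1) ∣ ∏ i ∈ s, (1 - X ^ (i + 1)) - 1 := by
  induction s using Finset.induction_on with
  | empty => simp
  | insert a s ha ih =>
    rw [Finset.prod_insert ha]
    have h1 := ih fun i hi => hs i (Finset.mem_insert_of_mem hi)
    have h2 : (X : ℤ⟦X⟧) ^ (M + 1) ∣ X ^ (a + 1) :=
      pow_dvd_pow _ (by have := hs a (Finset.mem_insert_self _ _); omega)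
    have : (1 - X ^ (a + 1)) * ∏ i ∈ s, ((1 : ℤ⟦X⟧) - X ^ (i + 1)) - 1 =
      (∏ i ∈ s, ((1 : ℤ⟦X⟧) - X ^ (i + 1)) - 1) -
        X ^ (a + 1) * ∏ i ∈ s, ((1 : ℤ⟦X⟧) - X ^ (i + 1)) := by ring
    rw [this]
    exact dvd_sub h1 (h2.mul_right _)

/-- The pentagonal number theorem in the form used below: `E` agrees with the finite product `G M` up to
order `M`. -/
lemma X_pow_dvd_E_sub_G (M : ℕ) : (X : ℤ⟦X⟧) ^ (M + 1) ∣ E - G M := by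
  rw [X_pow_dvd_iff]
  intro m hm
  obtain ⟨s, hs, hs'⟩ := ((coeff_prod_one_sub_X_pow_eventually_eq ℤ m).and
    (Filter.eventually_ge_atTop (Finset.range M))).exists
  have h := X_pow_dvd_prod_sub_one M (s \ Finset.range M) (by simp)
  have h2 := h.mul_left (G M)
  rw [mul_sub, mul_one, G, mul_comm, Finset.prod_sdiff hs', X_pow_dvd_iff] at h2
  have h3 := h2 m hm
  rw [map_sub, hs] at h3
  rw [map_sub]
  exact h3

/-- Jacobi's identity `E³ = ∑ₖ (-1)^k (2k+1) q^{k(k+1)/2}` up to order `n`. The error in replacing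
`E * qbinom (2n+1) (n-k)` by `1` has order at least `n - k + 1`, which the factor `q^{k(k+1)/2}` lifts
to `n + 1`. -/
lemma X_pow_dvd_E_cube_sub (n : ℕ) : (X : ℤ⟦X⟧) ^ (n + 1) ∣ E ^ 3 - ∑ k ∈ Finset.range (n + 1),
    (-1) ^ k * (2 * (k : ℤ⟦X⟧) + 1) * X ^ (k * (k + 1) / 2) := by
  have h1 : (X : ℤ⟦X⟧) ^ (n + 1) ∣ E ^ 3 - E * G n ^ 2 := by
    have : E ^ 3 - E * G n ^ 2 = (E - G n) * (E * (E + G n)) := by ring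
    rw [this]
    exact (X_pow_dvd_E_sub_G n).mul_right _
  have h2 : (X : ℤ⟦X⟧) ^ (n + 1) ∣ E * G n ^ 2 - ∑ k ∈ Finset.range (n + 1),
      (-1) ^ k * (2 * (k : ℤ⟦X⟧) + 1) * X ^ (k * (k + 1) / 2) := by
    rw [G_sq, Finset.mul_sum, ← Finset.sum_sub_distrib]
    refine Finset.dvd_sum fun k hk => ?_
    have hk : k ≤ n := by simpa [Nat.lt_succ_iff] using hk
    obtain ⟨j, rfl⟩ := Nat.exists_eq_add_of_le hk
    rw [show k + j - k = j by omega]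
    have h3 : (X : ℤ⟦X⟧) ^ (j + 1) ∣ E * qbinom (2 * (k + j) + 1) j - 1 := by
      have hb := qbinom_mul (N := 2 * (k + j) + 1) (m := j) (by omega)
      rw [show 2 * (k + j) + 1 - j = 2 * k + j + 1 by omega] at hb
      have d1 := X_pow_dvd_E_sub_G j
      have d2 : (X : ℤ⟦X⟧) ^ (j + 1) ∣ E - G (2 * k + j + 1) :=
        (pow_dvd_pow _ (by omega)).trans (X_pow_dvd_E_sub_G _)
      have d3 : (X : ℤ⟦X⟧) ^ (j + 1) ∣ E - G (2 * (k + j) + 1) :=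
        (pow_dvd_pow _ (by omega)).trans (X_pow_dvd_E_sub_G _)
      have : E * qbinom (2 * (k + j) + 1) j - 1 =
          ((E - G j) * E + (E - G (2 * k + j + 1)) * G j
            - (E - G (2 * (k + j) + 1)) * E) * (iG j * iG (2 * k + j + 1)) := by
        have i1 := G_mul_iG j
        have i2 := G_mul_iG (2 * k + j + 1)
        rw [← hb]
        linear_combination
          (-((E * qbinom (2 * (k + j) + 1) j - 1) * (G (2 * k + j + 1) * iG (2 * k + j + 1)))) * i1
            - (E * qbinom (2 * (k + j) + 1) j - 1) * i2
      rw [this]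
      exact ((((d1.mul_right _).add (d2.mul_right _)).sub (d3.mul_right _))).mul_right _
    have : E * ((-1) ^ k * (2 * (k : ℤ⟦X⟧) + 1) * X ^ (k * (k + 1) / 2) * qbinom (2 * (k + j) + 1) j)
        - (-1) ^ k * (2 * (k : ℤ⟦X⟧) + 1) * X ^ (k * (k + 1) / 2) =
        (-1) ^ k * (2 * (k : ℤ⟦X⟧) + 1) * (X ^ (k * (k + 1) / 2) *
          (E * qbinom (2 * (k + j) + 1) j - 1)) := by ring
    rw [this]
    refine Dvd.dvd.mul_left ?_ _
    refine dvd_trans ?_ (mul_dvd_mul_left _ h3)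
    rw [← pow_add]
    apply pow_dvd_pow
    have : 2 * k ≤ k * (k + 1) := by nlinarith [Nat.le_mul_self k]
    omega
  simpa using h1.add h2

lemma coeff_jsum (m : ℕ) : coeff m (E ^ 3) = ∑ k ∈ Finset.range (m + 1),
    if m = k * (k + 1) / 2 then (-1) ^ k * (2 * (k : ℤ) + 1) else 0 := by
  have h := X_pow_dvd_iff.1 (X_pow_dvd_E_cube_sub m) m (by omega)
  rw [map_sub, sub_eq_zero] at h
  rw [h, map_sum]
  refine Finset.sum_congr rfl fun k _ => ?_
  have : ((-1) ^ k * (2 * (k : ℤ⟦X⟧) + 1) * X ^ (k * (k + 1) / 2) : ℤ⟦X⟧)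
    = C ((-1) ^ k * (2 * (k : ℤ) + 1)) * X ^ (k * (k + 1) / 2) := by simp
  rw [this, coeff_C_mul, coeff_X_pow]
  simp

lemma tri_inj {k l : ℕ} (h : k * (k + 1) / 2 = l * (l + 1) / 2) : k = l := by
  have h1 := Nat.even_mul_succ_self k
  have h2 := Nat.even_mul_succ_self l
  obtain ⟨r, hr⟩ := h1
  obtain ⟨s, hs⟩ := h2
  have : k * (k + 1) = l * (l + 1) := by omega
  nlinarith

lemma coeff_E_cube_tri (k : ℕ) :
    coeff (k * (k + 1) / 2) (E ^ 3) = (-1) ^ k * (2 * (k : ℤ) + 1) := by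
  rw [coeff_jsum, Finset.sum_eq_single k]
  · simp
  · intro b _ hb
    rw [if_neg]
    intro h
    exact hb (tri_inj h).symm
  · intro h
    exfalso
    apply h
    rw [Finset.mem_range]
    have : 2 * k ≤ k * (k + 1) := by nlinarith [Nat.le_mul_self k]
    omega

lemma coeff_E_cube_of_forall {m : ℕ} (h : ∀ k : ℕ, m ≠ k * (k + 1) / 2) :
    coeff m (E ^ 3) = 0 := by
  rw [coeff_jsum]
  exact Finset.sum_eq_zero fun k _ => if_neg (h k)

/-! ### The 7-dissection of the Euler product -/

/-- The substitution `q ↦ q⁷`. -/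
noncomputable def phi : ℤ⟦X⟧ →ₐ[ℤ] ℤ⟦X⟧ := expand 7 (by norm_num)

lemma coeff_phi (f : ℤ⟦X⟧) (n : ℕ) :
    coeff n (phi f) = if 7 ∣ n then coeff (n / 7) f else 0 := coeff_expand 7 _ f

/-- `E(q⁷)`. -/
noncomputable def E7 : ℤ⟦X⟧ := phi E

/-- `E(q⁴⁹)`. -/
noncomputable def E49 : ℤ⟦X⟧ := phi E7

/-- All exponents occurring in `f` lie in the residue class `r` modulo 7. -/
def IsRes (r : ZMod 7) (f : ℤ⟦X⟧) : Prop := ∀ n : ℕ, (n : ZMod 7) ≠ r → coeff n f = 0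

lemma IsRes.mul {r s : ZMod 7} {f g : ℤ⟦X⟧} (hf : IsRes r f) (hg : IsRes s g) :
    IsRes (r + s) (f * g) := by
  intro n hn
  rw [coeff_mul]
  refine Finset.sum_eq_zero fun p hp => ?_
  by_cases h : (p.1 : ZMod 7) = r
  · rw [hg, mul_zero]
    rintro h'
    apply hn
    rw [← Finset.HasAntidiagonal.mem_antidiagonal.1 hp, Nat.cast_add, h, h']
  · rw [hf _ h, zero_mul]

/-- The part of a power series supported on exponents congruent to `r` modulo 7. -/
noncomputable def comp (r : ZMod 7) : ℤ⟦X⟧ →+ ℤ⟦X⟧ where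
  toFun f := mk fun n => if (n : ZMod 7) = r then coeff n f else 0
  map_zero' := by ext; simp
  map_add' f g := by
    ext n
    simp only [coeff_mk, map_add]
    split_ifs <;> simp

lemma coeff_comp (r : ZMod 7) (f : ℤ⟦X⟧) (n : ℕ) :
    coeff n (comp r f) = if (n : ZMod 7) = r then coeff n f else 0 := by
  exact coeff_mk n (fun n : ℕ => if (n : ZMod 7) = r then coeff n f else 0)

lemma isRes_comp (r : ZMod 7) (f : ℤ⟦X⟧) : IsRes r (comp r f) := fun n hn => by
  rw [coeff_comp, if_neg hn]

/-- A factor supported on a single residue class can be pulled out of `comp`, with a shift of the class. -/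
lemma comp_mul {r s u : ZMod 7} {f : ℤ⟦X⟧} (hf : IsRes s f) (g : ℤ⟦X⟧)
    (h : r = s + u) : comp r (f * g) = f * comp u g := by
  ext n
  rw [coeff_comp]
  by_cases hn : (n : ZMod 7) = r
  · rw [if_pos hn, coeff_mul, coeff_mul]
    refine Finset.sum_congr rfl fun p hp => ?_
    rw [coeff_comp]
    by_cases h1 : (p.1 : ZMod 7) = s
    · rw [if_pos]
      have := Finset.HasAntidiagonal.mem_antidiagonal.1 hp
      rw [← this, h, Nat.cast_add, h1] at hn
      exact add_left_cancel hn
    · rw [hf _ h1]; simp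
  · rw [if_neg hn, hf.mul (isRes_comp u g) n (by rwa [← h])]

lemma comp_of_isRes {r : ZMod 7} {f : ℤ⟦X⟧} (h : IsRes r f) : comp r f = f := by
  ext n
  rw [coeff_comp]
  split_ifs with h1
  · rfl
  · exact (h n h1).symm

lemma isRes_phi (f : ℤ⟦X⟧) : IsRes 0 (phi f) := by
  intro n hn
  rw [coeff_phi, if_neg]
  rwa [← ZMod.natCast_eq_zero_iff]

lemma isRes_X_pow (k : ℕ) : IsRes k (X ^ k) := by
  intro n hn
  rw [coeff_X_pow, if_neg]
  rintro rfl
  exact hn rfl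

lemma sum_comp (f : ℤ⟦X⟧) :
    f = comp 0 f + comp 1 f + comp 2 f + comp 3 f + comp 4 f + comp 5 f + comp 6 f := by
  ext n
  simp only [map_add, coeff_comp]
  generalize (n : ZMod 7) = r
  have h : r = 0 ∨ r = 1 ∨ r = 2 ∨ r = 3 ∨ r = 4 ∨ r = 5 ∨ r = 6 := by revert r; decide
  rcases h with rfl | rfl | rfl | rfl | rfl | rfl | rfl <;> simp +decide

/-- `q² E(q⁴⁹)`, which is minus the component of `E` in the class `2`. -/
noncomputable def D : ℤ⟦X⟧ := X ^ 2 * E49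

/-- The component of `E` in the class `0`. -/
noncomputable def ca : ℤ⟦X⟧ := comp 0 E

/-- The component of `E` in the class `1`. -/
noncomputable def cb : ℤ⟦X⟧ := comp 1 E

/-- The component of `E` in the class `5`. -/
noncomputable def cc : ℤ⟦X⟧ := comp 5 E

lemma coeff_E49_mul (k m : ℕ) (f : ℤ⟦X⟧) :
    coeff m (X ^ k * phi (phi f)) = if k ≤ m ∧ 49 ∣ m - k then coeff ((m - k) / 49) f else 0 := by
  rw [coeff_X_pow_mul']
  by_cases h : k ≤ m
  · rw [if_pos h, coeff_phi]
    by_cases h7 : 7 ∣ m - k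
    · rw [if_pos h7, coeff_phi, Nat.div_div_eq_div_mul]
      congr 1
      simp only [eq_iff_iff]
      omega
    · rw [if_neg h7, if_neg (by omega)]
  · rw [if_neg h, if_neg (by tauto)]

lemma coeff_E_ne_zero {n : ℕ} (h : coeff n E ≠ 0) : ∃ k : ℤ, pentagonal k = n := by
  by_contra h'
  exact h (coeff_pentagonalSeries_eq_zero ℤ h')

/-- Since `2 * pentagonal k = k (3k - 1)`, the classes not of this form do not occur in `E`. -/
lemma comp_E_eq_zero (r : ZMod 7) (h : ∀ k : ZMod 7, k * (3 * k - 1) ≠ 2 * r) : comp r E = 0 := by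
  ext n
  rw [coeff_comp, map_zero]
  split_ifs with hn
  · by_contra h'
    obtain ⟨k, rfl⟩ := coeff_E_ne_zero h'
    have := congrArg (Int.cast : ℤ → ZMod 7) (two_mul_natCast_pentagonal k)
    push_cast at this
    rw [hn] at this
    exact h _ this.symm
  · rfl

/-- The pentagonal numbers congruent to `2` modulo 7 are those of index `7l - 1`, and
`pentagonal (7l - 1) = 49 pentagonal l + 2`. -/
lemma comp_two_E : comp 2 E = -D := by
  ext n
  rw [coeff_comp, D, E49, E7, map_neg, coeff_E49_mul]
  have key : ∀ l : ℤ, pentagonal (7 * l - 1) = 49 * pentagonal l + 2 := by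
    intro l
    have h1 := two_mul_natCast_pentagonal l
    have h2 := two_mul_natCast_pentagonal (7 * l - 1)
    zify
    nlinarith
  have hE : ∀ l : ℤ, coeff (49 * pentagonal l + 2) E = - coeff (pentagonal l) E := by
    intro l
    rw [← key, E, coeff_pentagonalSeries_pentagonal, coeff_pentagonalSeries_pentagonal,
      show 7 * l - 1 = l + (2 * (3 * l - 1) + 1) by ring, Int.negOnePow_add, Int.negOnePow_succ,
      Int.negOnePow_two_mul]
    simp
  split_ifs with h1 h2 h2
  · obtain ⟨h2, m, hm⟩ := h2
    obtain rfl : n = 49 * m + 2 := by omega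
    rw [hm, Nat.mul_div_cancel_left _ (by norm_num)]
    by_cases hz : coeff m E = 0
    · rw [hz]
      by_contra h'
      obtain ⟨k, hk⟩ := coeff_E_ne_zero h'
      have h3 := two_mul_natCast_pentagonal k
      rw [hk] at h3
      have h4 : (k : ZMod 7) = -1 := by
        have := congrArg (Int.cast : ℤ → ZMod 7) h3
        push_cast at this
        rw [show (49 : ZMod 7) = 0 by decide] at this
        revert this
        generalize (k : ZMod 7) = x
        generalize (m : ZMod 7) = y
        revert x y
        decide
      have h5 : ∃ l, k = 7 * l - 1 := by
        have : ((k + 1 : ℤ) : ZMod 7) = 0 := by push_cast; rw [h4]; ring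
        obtain ⟨l, hl⟩ := (ZMod.intCast_zmod_eq_zero_iff_dvd _ 7).1 this
        exact ⟨l, by push_cast at hl; omega⟩
      obtain ⟨l, rfl⟩ := h5
      rw [key] at hk
      have : pentagonal l = m := by omega
      subst this
      rw [hE, hz] at h'
      simp at h'
    · obtain ⟨l, rfl⟩ := coeff_E_ne_zero hz
      exact hE l
  · by_contra h'
    obtain ⟨k, rfl⟩ := coeff_E_ne_zero (by simpa using h')
    have h3 := two_mul_natCast_pentagonal k
    have h4 : (k : ZMod 7) = -1 := by
      have := congrArg (Int.cast : ℤ → ZMod 7) h3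
      push_cast at this
      rw [h1] at this
      revert this
      generalize (k : ZMod 7) = x
      revert x
      decide
    have h5 : ∃ l, k = 7 * l - 1 := by
      have : ((k + 1 : ℤ) : ZMod 7) = 0 := by push_cast; rw [h4]; ring
      obtain ⟨l, hl⟩ := (ZMod.intCast_zmod_eq_zero_iff_dvd _ 7).1 this
      exact ⟨l, by push_cast at hl; omega⟩
    obtain ⟨l, rfl⟩ := h5
    rw [key] at h2
    omega
  · exfalso
    obtain ⟨h2, m, hm⟩ := h2
    obtain rfl : n = 49 * m + 2 := by omega
    apply h1
    push_cast
    rw [show (49 : ZMod 7) = 0 by decide]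
    ring
  · simp

/-- The 7-dissection of `E`: pentagonal numbers are `0`, `1`, `2` or `5` modulo 7. -/
lemma E_eq : E = ca + cb + cc - D := by
  conv_lhs => rw [sum_comp E]
  rw [comp_two_E, comp_E_eq_zero 3 (by decide), comp_E_eq_zero 4 (by decide),
    comp_E_eq_zero 6 (by decide), ca, cb, cc]
  ring

lemma coeff_E_cube_ne_zero {n : ℕ} (h : coeff n (E ^ 3) ≠ 0) :
    ∃ k : ℕ, n = k * (k + 1) / 2 := by
  by_contra! h'
  exact h (coeff_E_cube_of_forall h')

lemma two_mul_half (k : ℕ) : 2 * (k * (k + 1) / 2) = k * (k + 1) :=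
  Nat.two_mul_div_two_of_even (Nat.even_mul_succ_self k)

lemma comp_E_cube_eq_zero (r : ZMod 7) (h : ∀ k : ZMod 7, k * (k + 1) ≠ 2 * r) :
    comp r (E ^ 3) = 0 := by
  ext n
  rw [coeff_comp, map_zero]
  split_ifs with hn
  · by_contra h'
    obtain ⟨k, rfl⟩ := coeff_E_cube_ne_zero h'
    have := congrArg (Nat.cast : ℕ → ZMod 7) (two_mul_half k)
    push_cast at this
    rw [hn] at this
    exact h _ this.symm
  · rfl

lemma D_cube : D ^ 3 = X ^ 6 * phi (phi (E ^ 3)) := by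
  rw [D, E49, E7, map_pow, map_pow]; ring

/-- The triangular numbers congruent to `6` modulo 7 are those of index `7l + 3`, whose coefficient
`±(2(7l + 3) + 1)` in Jacobi's identity is `7` times that of index `l`, up to sign. -/
lemma comp_six_E_cube : comp 6 (E ^ 3) = -7 * D ^ 3 := by
  ext n
  rw [coeff_comp, D_cube, show (-7 : ℤ⟦X⟧) = C (-7) by simp, coeff_C_mul, coeff_E49_mul]
  have key : ∀ l : ℕ, (7 * l + 3) * (7 * l + 3 + 1) / 2 = 49 * (l * (l + 1) / 2) + 6 := by
    intro l
    have h1 := two_mul_half l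
    have h2 := two_mul_half (7 * l + 3)
    nlinarith
  have hE : ∀ l : ℕ, coeff (49 * (l * (l + 1) / 2) + 6) (E ^ 3)
      = -7 * coeff (l * (l + 1) / 2) (E ^ 3) := by
    intro l
    rw [← key, coeff_E_cube_tri, coeff_E_cube_tri, pow_add, pow_mul]
    norm_num
    ring
  have hk : ∀ k : ℕ, ((k * (k + 1) / 2 : ℕ) : ZMod 7) = 6 → ∃ l, k = 7 * l + 3 := by
    intro k h1
    have h4 : (k : ZMod 7) = (3 : ℕ) := by
      have := congrArg (Nat.cast : ℕ → ZMod 7) (two_mul_half k)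
      rw [Nat.cast_mul, h1] at this
      push_cast at this ⊢
      revert this
      generalize (k : ZMod 7) = x
      revert x
      decide
    rw [ZMod.natCast_eq_natCast_iff'] at h4
    exact ⟨k / 7, by omega⟩
  split_ifs with h1 h2 h2
  · obtain ⟨h2, m, hm⟩ := h2
    obtain rfl : n = 49 * m + 6 := by omega
    rw [hm, Nat.mul_div_cancel_left _ (by norm_num)]
    by_cases hz : coeff m (E ^ 3) = 0
    · rw [hz]
      by_contra h'
      obtain ⟨k, hk'⟩ := coeff_E_cube_ne_zero (by simpa using h')
      rw [hk'] at h1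
      obtain ⟨l, rfl⟩ := hk k h1
      rw [key] at hk'
      obtain rfl : m = l * (l + 1) / 2 := by omega
      rw [hE, hz] at h'
      simp at h'
    · obtain ⟨l, rfl⟩ := coeff_E_cube_ne_zero hz
      exact hE l
  · by_contra h'
    obtain ⟨k, rfl⟩ := coeff_E_cube_ne_zero (by simpa using h')
    obtain ⟨l, rfl⟩ := hk k h1
    rw [key] at h2
    omega
  · exfalso
    obtain ⟨h2, m, hm⟩ := h2
    obtain rfl : n = 49 * m + 6 := by omega
    apply h1
    push_cast
    rw [show (49 : ZMod 7) = 0 by decide]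
    ring
  · simp

lemma isRes_ca : IsRes 0 ca := isRes_comp _ _
lemma isRes_cb : IsRes 1 cb := isRes_comp _ _
lemma isRes_cc : IsRes 5 cc := isRes_comp _ _
lemma isRes_D : IsRes 2 D := by
  have := (isRes_X_pow 2).mul (isRes_phi E7)
  rw [add_zero] at this
  exact this

/-- Multiplication by `E` on components: a recursive way to expand the components of `E ^ k`. -/
lemma comp_E_mul (r r1 r5 r2 : ZMod 7) (f : ℤ⟦X⟧) (h1 : r = 1 + r1)
    (h5 : r = 5 + r5) (h2 : r = 2 + r2) :
    comp r (E * f) = ca * comp r f + cb * comp r1 f + cc * comp r5 f - D * comp r2 f := by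
  conv_lhs => rw [E_eq]
  rw [sub_mul, add_mul, add_mul, map_sub, map_add, map_add, comp_mul isRes_ca f (zero_add r).symm,
    comp_mul isRes_cb f h1, comp_mul isRes_cc f h5, comp_mul isRes_D f h2]

lemma comp_E_mul_0 (f : ℤ⟦X⟧) : comp 0 (E * f) =
    ca * comp 0 f + cb * comp 6 f + cc * comp 2 f - D * comp 5 f :=
  comp_E_mul _ _ _ _ f (by decide) (by decide) (by decide)
lemma comp_E_mul_1 (f : ℤ⟦X⟧) : comp 1 (E * f) =
    ca * comp 1 f + cb * comp 0 f + cc * comp 3 f - D * comp 6 f :=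
  comp_E_mul _ _ _ _ f (by decide) (by decide) (by decide)
lemma comp_E_mul_2 (f : ℤ⟦X⟧) : comp 2 (E * f) =
    ca * comp 2 f + cb * comp 1 f + cc * comp 4 f - D * comp 0 f :=
  comp_E_mul _ _ _ _ f (by decide) (by decide) (by decide)
lemma comp_E_mul_3 (f : ℤ⟦X⟧) : comp 3 (E * f) =
    ca * comp 3 f + cb * comp 2 f + cc * comp 5 f - D * comp 1 f :=
  comp_E_mul _ _ _ _ f (by decide) (by decide) (by decide)
lemma comp_E_mul_4 (f : ℤ⟦X⟧) : comp 4 (E * f) =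
    ca * comp 4 f + cb * comp 3 f + cc * comp 6 f - D * comp 2 f :=
  comp_E_mul _ _ _ _ f (by decide) (by decide) (by decide)
lemma comp_E_mul_5 (f : ℤ⟦X⟧) : comp 5 (E * f) =
    ca * comp 5 f + cb * comp 4 f + cc * comp 0 f - D * comp 3 f :=
  comp_E_mul _ _ _ _ f (by decide) (by decide) (by decide)
lemma comp_E_mul_6 (f : ℤ⟦X⟧) : comp 6 (E * f) =
    ca * comp 6 f + cb * comp 5 f + cc * comp 1 f - D * comp 4 f :=
  comp_E_mul _ _ _ _ f (by decide) (by decide) (by decide)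

lemma comp_E_0 : comp 0 E = ca := rfl
lemma comp_E_1 : comp 1 E = cb := rfl
lemma comp_E_5 : comp 5 E = cc := rfl
lemma comp_E_3 : comp 3 E = 0 := comp_E_eq_zero 3 (by decide)
lemma comp_E_4 : comp 4 E = 0 := comp_E_eq_zero 4 (by decide)
lemma comp_E_6 : comp 6 E = 0 := comp_E_eq_zero 6 (by decide)

lemma comp_E_cube (r : ZMod 7) : comp r (E ^ 3) = comp r (E * (E * E)) := by
  congr 1; ring

lemma intCast_ne_zero {a : ℤ} (h : a ≠ 0) : (a : ℤ⟦X⟧) ≠ 0 := by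
  intro h'
  have := congrArg (constantCoeff (R := ℤ)) h'
  rw [map_intCast, map_zero] at this
  exact h (by simpa using this)

/-- From the class `6` of `E³`. -/
lemma rel0 : ca * cb * cc + D ^ 3 = 0 := by
  have h := comp_six_E_cube
  rw [comp_E_cube] at h
  simp only [comp_E_mul_0, comp_E_mul_1, comp_E_mul_2, comp_E_mul_3, comp_E_mul_4, comp_E_mul_5,
    comp_E_mul_6, comp_E_0, comp_E_1, comp_two_E, comp_E_3, comp_E_4, comp_E_5, comp_E_6] at h
  refine mul_left_cancel₀ (intCast_ne_zero (a := 6) (by norm_num)) ?_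
  push_cast
  linear_combination h

/-- From the class `2` of `E³`, which is empty because `2` is not a triangular number modulo 7. -/
lemma rel1 : cc * D ^ 2 - ca ^ 2 * D + ca * cb ^ 2 = 0 := by
  have h := comp_E_cube_eq_zero 2 (by decide)
  rw [comp_E_cube] at h
  simp only [comp_E_mul_0, comp_E_mul_1, comp_E_mul_2, comp_E_mul_3, comp_E_mul_4, comp_E_mul_5,
    comp_E_mul_6, comp_E_0, comp_E_1, comp_two_E, comp_E_3, comp_E_4, comp_E_5, comp_E_6] at h
  refine mul_left_cancel₀ (intCast_ne_zero (a := 3) (by norm_num)) ?_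
  push_cast
  linear_combination h

/-- From the class `4` of `E³`, which is empty because `4` is not a triangular number modulo 7. -/
lemma rel2 : ca * D ^ 2 - cb ^ 2 * D + cb * cc ^ 2 = 0 := by
  have h := comp_E_cube_eq_zero 4 (by decide)
  rw [comp_E_cube] at h
  simp only [comp_E_mul_0, comp_E_mul_1, comp_E_mul_2, comp_E_mul_3, comp_E_mul_4, comp_E_mul_5,
    comp_E_mul_6, comp_E_0, comp_E_1, comp_two_E, comp_E_3, comp_E_4, comp_E_5, comp_E_6] at h
  refine mul_left_cancel₀ (intCast_ne_zero (a := 3) (by norm_num)) ?_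
  push_cast
  linear_combination h

/-- From the class `5` of `E³`, which is empty because `5` is not a triangular number modulo 7. -/
lemma rel3 : cb * D ^ 2 - cc ^ 2 * D + ca ^ 2 * cc = 0 := by
  have h := comp_E_cube_eq_zero 5 (by decide)
  rw [comp_E_cube] at h
  simp only [comp_E_mul_0, comp_E_mul_1, comp_E_mul_2, comp_E_mul_3, comp_E_mul_4, comp_E_mul_5,
    comp_E_mul_6, comp_E_0, comp_E_1, comp_two_E, comp_E_3, comp_E_4, comp_E_5, comp_E_6] at h
  refine mul_left_cancel₀ (intCast_ne_zero (a := 3) (by norm_num)) ?_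
  push_cast
  linear_combination h

/-! ### Components of powers and the modular equation -/

/-- The auxiliary series `-(a³b + b³c + c³a) - 8D⁴` in the components `a, b, c` of `E`. It equals
`q E(q⁷)⁴` by `tt_eq`. -/
noncomputable def tt : ℤ⟦X⟧ := -(ca ^ 3 * cb + cb ^ 3 * cc + cc ^ 3 * ca) - 8 * D ^ 4

lemma comp_E_pow_four : comp 1 (E ^ 4) = -4 * tt - 7 * D ^ 4 := by
  rw [show E ^ 4 = E * (E * (E * E)) by ring]
  simp only [comp_E_mul_0, comp_E_mul_1, comp_E_mul_2, comp_E_mul_3, comp_E_mul_4, comp_E_mul_5,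
    comp_E_mul_6, comp_E_0, comp_E_1, comp_two_E, comp_E_3, comp_E_4, comp_E_5, comp_E_6, tt]
  linear_combination (-24 * D) * rel0

lemma comp_E_pow_five : comp 3 (E ^ 5) = 10 * tt * D + 49 * D ^ 5 := by
  rw [show E ^ 5 = E * (E * (E * (E * E))) by ring]
  simp only [comp_E_mul_0, comp_E_mul_1, comp_E_mul_2, comp_E_mul_3, comp_E_mul_4, comp_E_mul_5,
    comp_E_mul_6, comp_E_0, comp_E_1, comp_two_E, comp_E_3, comp_E_4, comp_E_5, comp_E_6, tt]
  linear_combination (30 * D ^ 2) * rel0 + (10 * ca * cb) * rel1 + (10 * cb * cc) * rel2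
    + (10 * ca * cc) * rel3

lemma comp_E_pow_six : comp 5 (E ^ 6) = 49 * D ^ 6 := by
  rw [show E ^ 6 = E * (E * (E * (E * (E * E)))) by ring]
  simp only [comp_E_mul_0, comp_E_mul_1, comp_E_mul_2, comp_E_mul_3, comp_E_mul_4, comp_E_mul_5,
    comp_E_mul_6, comp_E_0, comp_E_1, comp_two_E, comp_E_3, comp_E_4, comp_E_5, comp_E_6]
  linear_combination (36 * ca * cb * cc - 48 * D ^ 3) * rel0 +
    (-54 * ca * cb * D + 54 * ca * cc ^ 2 + 6 * cb ^ 3) * rel1 +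
    (6 * cc ^ 3 - 54 * cb * cc * D) * rel2 + (6 * ca ^ 3) * rel3

/-- The modular equation of degree 7 for `E / D`, with `tt` as a parameter. -/
lemma modular_eq : tt ^ 2 = tt * (7 * E ^ 3 * D + 35 * E ^ 2 * D ^ 2 + 49 * E * D ^ 3) +
    (E ^ 7 * D + 7 * E ^ 6 * D ^ 2 + 21 * E ^ 5 * D ^ 3 + 49 * E ^ 4 * D ^ 4 + 147 * E ^ 3 * D ^ 5
      + 343 * E ^ 2 * D ^ 6 + 343 * E * D ^ 7) := by
  rw [E_eq, tt]
  have r0 := rel0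
  have r1 := rel1
  have r2 := rel2
  have r3 := rel3
  generalize ca = a at *
  generalize cb = b at *
  generalize cc = c at *
  generalize D = D at *
  -- Cofactors expressing the difference of the two sides in the ideal generated by
  -- the four relations.
  linear_combination (-7 * a ^ 4 * b - 21 * a ^ 4 * D - 21 * a ^ 3 * b * c - 64 * a ^ 3 * b *
      D + 2 * a ^ 3 * c ^ 2 - 84 * a ^ 3 * c * D + 28 * a ^ 3 * D ^ 2 + 2 * a ^ 2 * b ^ 3 -
      112 * a ^ 2 * b ^ 2 * D - 28 * a ^ 2 * b * c ^ 2 - 196 * a ^ 2 * b * c * D + 28 * a ^ 2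
      * b * D ^ 2 - 112 * a ^ 2 * c ^ 2 * D + 14 * a ^ 2 * c * D ^ 2 + 35 * a ^ 2 * D ^ 3 - 84
      * a * b ^ 3 * D - 196 * a * b ^ 2 * c * D + 7 * a * b ^ 2 * D ^ 2 - 14 * a * b * c ^ 3 -
      203 * a * b * c ^ 2 * D - 6 * a * b * c * D ^ 2 + 84 * a * b * D ^ 3 - 64 * a * c ^ 3 *
      D + 28 * a * c ^ 2 * D ^ 2 + 56 * a * c * D ^ 3 + 28 * a * D ^ 4 - 14 * b ^ 4 * D - 60 *
      b ^ 3 * c * D + 3 * b ^ 2 * c ^ 3 - 112 * b ^ 2 * c ^ 2 * D + 42 * b ^ 2 * D ^ 3 - 84 *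
      b * c ^ 3 * D + 7 * b * c ^ 2 * D ^ 2 + 56 * b * c * D ^ 3 + 28 * b * D ^ 4 - 21 * c ^ 4
      * D + 28 * c ^ 3 * D ^ 2 + 35 * c ^ 2 * D ^ 3 + 35 * c * D ^ 4 + 9 * D ^ 5 + 7 * b ^ 4 *
      c + 7 * b ^ 3 * c ^ 2)  *  r0 + (a ^ 5 + 7 * a ^ 4 * c - 14 * a ^ 3 * b * D + 21 * a ^ 3
      * c ^ 2 + a ^ 3 * c * D - 28 * a ^ 2 * b ^ 2 * D - 7 * a ^ 2 * b * D ^ 2 + 28 * a ^ 2 *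
      c ^ 3 + 7 * a ^ 2 * c ^ 2 * D - 7 * a ^ 2 * D ^ 3 - 21 * a * b ^ 3 * D - 7 * a * b ^ 2 *
      D ^ 2 - 3 * a * b * D ^ 3 + 14 * a * c ^ 4 + 7 * a * c ^ 3 * D + 3 * a * c ^ 2 * D ^ 2 -
      28 * a * c * D ^ 3 + 28 * a * D ^ 4 - 7 * b ^ 4 * D - b ^ 3 * D ^ 2 + 28 * b * D ^ 4 + 7
      * c ^ 3 * D ^ 2 - 28 * c ^ 2 * D ^ 3 + 7 * c * D ^ 4 - 7 * D ^ 5 - 7 * b ^ 3 * c * D +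
      28 * b ^ 2 * c * D ^ 2 - b * c ^ 4 + 28 * b * c ^ 2 * D ^ 2 - 7 * b * c * D ^ 3 - 7 * b
      ^ 3 * c ^ 2 - 7 * b ^ 2 * c ^ 3 - 3 * b ^ 2 * c ^ 2 * D)  *  r1 + (b ^ 5 - 7 * c ^ 4 * D
      - 14 * b ^ 3 * c * D - 28 * b ^ 2 * c ^ 2 * D - 21 * b * c ^ 3 * D)  *  r2 + (c ^ 5)  *
      r3

/-! ### Evaluation of the parameter by roots of unity -/

lemma prod_one_sub_root_mul {R : Type*} [CommRing R] [IsDomain R] {ζ : R}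
    (h : IsPrimitiveRoot ζ 7) (y : R) : ∏ i ∈ Finset.range 7, (1 - ζ ^ i * y) = 1 - y ^ 7 := by
  classical
  have h1 := h.pow_sub_pow_eq_prod_sub_mul 1 y (by norm_num)
  rw [one_pow] at h1
  have h2 : Polynomial.nthRootsFinset 7 (1 : R) = (Finset.range 7).image (ζ ^ ·) := by
    symm
    have hinj : Set.InjOn (ζ ^ · : ℕ → R) (Finset.range 7) := fun i hi j hj hij =>
      h.pow_inj (by simpa using hi) (by simpa using hj) hij
    apply Finset.eq_of_subset_of_card_le
    · intro x hx
      obtain ⟨i, -, rfl⟩ := Finset.mem_image.1 hx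
      rw [Polynomial.mem_nthRootsFinset (by norm_num)]
      rw [← pow_mul, mul_comm, pow_mul, h.pow_eq_one, one_pow]
    · rw [Finset.card_image_of_injOn hinj, h.card_nthRootsFinset, Finset.card_range]
  rw [h1, h2, Finset.prod_image]
  exact fun i hi j hj hij => h.pow_inj (by simpa using hi) (by simpa using hj) hij

/-- The inclusion of integral power series into complex ones. -/
noncomputable def ι : ℤ⟦X⟧ →+* ℂ⟦X⟧ := map (Int.castRingHom ℂ)

lemma ι_injective : Function.Injective ι := map_injective _ Int.cast_injective

/-- The substitution `q ↦ w q`, with values in complex power series. -/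
noncomputable def sig (w : ℂ) : ℤ⟦X⟧ →+* ℂ⟦X⟧ := (rescale w).comp ι

lemma coeff_sig (w : ℂ) (f : ℤ⟦X⟧) (n : ℕ) : coeff n (sig w f) = w ^ n * ((coeff n f : ℤ) : ℂ) := by
  simp [sig, ι]

lemma coeff_ι (f : ℤ⟦X⟧) (n : ℕ) : coeff n (ι f) = ((coeff n f : ℤ) : ℂ) := by
  simp [ι]

lemma sig_of_isRes {w : ℂ} (hw : w ^ 7 = 1) {r : ℕ} {f : ℤ⟦X⟧} (h : IsRes r f) :
    sig w f = C (w ^ r) * ι f := by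
  ext n
  rw [coeff_sig, coeff_C_mul, coeff_ι]
  by_cases hn : (n : ZMod 7) = r
  · rw [ZMod.natCast_eq_natCast_iff'] at hn
    congr 1
    rw [← Nat.div_add_mod n 7, ← Nat.div_add_mod r 7, hn, pow_add, pow_add, pow_mul, pow_mul, hw]
    simp
  · rw [h n hn]; simp

lemma sig_X (w : ℂ) : sig w X = C w * X := by
  rw [sig, RingHom.comp_apply, ι, map_X, rescale_X]

/-- A primitive seventh root of unity. -/
noncomputable def om : ℂ := Complex.exp (2 * Real.pi * Complex.I / 7)
lemma om_prim : IsPrimitiveRoot om 7 := by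
  simpa [om] using Complex.isPrimitiveRoot_exp 7 (by norm_num)

lemma C_prim {w : ℂ} (h : IsPrimitiveRoot w 7) : IsPrimitiveRoot (C w : ℂ⟦X⟧) 7 :=
  h.map_of_injective (f := C) C_injective

lemma prod_factor (m : ℕ) : ∏ i ∈ Finset.range 7, sig (om ^ i) (1 - X ^ m) =
    if 7 ∣ m then (1 - X ^ m) ^ 7 else 1 - (X ^ m) ^ 7 := by
  simp_rw [map_sub, map_one, map_pow, sig_X, mul_pow, ← map_pow, ← pow_mul]
  split_ifs with h
  · have : ∀ i, om ^ (i * m) = 1 := fun i => by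
      obtain ⟨k, rfl⟩ := h
      rw [mul_comm, mul_assoc, pow_mul, om_prim.pow_eq_one, one_pow]
    simp [this]
  · have h1 : IsPrimitiveRoot (om ^ m) 7 := om_prim.pow_of_coprime m
      (Nat.Coprime.symm ((Nat.Prime.coprime_iff_not_dvd (by norm_num)).2 h))
    have := prod_one_sub_root_mul (C_prim h1) (X ^ m)
    simp_rw [← map_pow, ← pow_mul] at this
    simp_rw [mul_comm _ m]
    rw [this]

lemma phi_X : phi X = X ^ 7 := expand_X 7 _

lemma phi_one_sub (m : ℕ) : phi (1 - X ^ m) = 1 - (X ^ m) ^ 7 := by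
  rw [map_sub, map_one, map_pow, phi_X, ← pow_mul, ← pow_mul, mul_comm]

lemma ι_one_sub (m : ℕ) : ι (1 - X ^ m) = 1 - X ^ m := by
  rw [map_sub, map_one, map_pow, ι, map_X]

/-- The finite form of `prod_sig_E`, where each factor `1 - q^m` is treated by `prod_factor`. -/
lemma prod_G (K : ℕ) : (∏ i ∈ Finset.range 7, sig (om ^ i) (G (7 * K))) * ι (phi (phi (G K))) =
    ι (phi (G (7 * K)) * phi (G K) ^ 7) := by
  induction K with
  | zero => simp [G]
  | succ K ih =>
    have e : G (7 * (K + 1)) = G (7 * K) * ((1 - X ^ (7 * K + 1)) * (1 - X ^ (7 * K + 2)) *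
      (1 - X ^ (7 * K + 3)) * (1 - X ^ (7 * K + 4)) * (1 - X ^ (7 * K + 5)) *
      (1 - X ^ (7 * K + 6)) * (1 - X ^ (7 * K + 7))) := by
      rw [show 7 * (K + 1) = 7 * K + 1 + 1 + 1 + 1 + 1 + 1 + 1 by ring]
      simp only [G_succ]
      ring
    rw [e]
    simp only [map_mul (sig _), Finset.prod_mul_distrib, prod_factor]
    rw [if_neg (by omega), if_neg (by omega), if_neg (by omega), if_neg (by omega),
      if_neg (by omega), if_neg (by omega), if_pos (by omega), G_succ K]
    simp only [map_mul, map_pow] at ih ⊢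
    simp only [phi_one_sub, ← pow_mul, ι_one_sub]
    linear_combination (1 - X ^ ((7 * K + 1) * 7)) * (1 - X ^ ((7 * K + 2) * 7)) *
      (1 - X ^ ((7 * K + 3) * 7)) * (1 - X ^ ((7 * K + 4) * 7)) *
      (1 - X ^ ((7 * K + 5) * 7)) * (1 - X ^ ((7 * K + 6) * 7)) *
      (1 - X ^ (7 * K + 7)) ^ 7 * (1 - X ^ ((K + 1) * 7 * 7)) * ih

lemma eq_of_forall_dvd {f g : ℂ⟦X⟧} (h : ∀ K : ℕ, X ^ K ∣ f - g) : f = g := by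
  ext n
  have := X_pow_dvd_iff.1 (h (n + 1)) n (by omega)
  rw [map_sub] at this
  exact sub_eq_zero.1 this

lemma sig_dvd (w : ℂ) {K : ℕ} {f : ℤ⟦X⟧} (h : X ^ K ∣ f) : X ^ K ∣ sig w f := by
  obtain ⟨g, rfl⟩ := h
  rw [map_mul, map_pow, sig_X, mul_pow]
  exact ⟨C w ^ K * sig w g, by ring⟩

lemma ι_dvd {K : ℕ} {f : ℤ⟦X⟧} (h : X ^ K ∣ f) : X ^ K ∣ ι f := by
  obtain ⟨g, rfl⟩ := h
  exact ⟨ι g, by rw [map_mul, map_pow, ι, map_X]⟩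

lemma phi_dvd {K : ℕ} {f : ℤ⟦X⟧} (h : X ^ K ∣ f) : X ^ K ∣ phi f := by
  obtain ⟨g, rfl⟩ := h
  exact ⟨(X ^ K) ^ 6 * phi g, by rw [map_mul, map_pow, phi_X]; ring⟩

/-- `∏ E(ω^i q) = E(q⁷)⁸ / E(q⁴⁹)`, the product being over the seventh roots of unity. -/
lemma prod_sig_E : (∏ i ∈ Finset.range 7, sig (om ^ i) E) * ι E49 = ι (E7 ^ 8) := by
  apply eq_of_forall_dvd
  intro K
  have d1 : (X : ℤ⟦X⟧) ^ K ∣ E - G (7 * K) :=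
    (pow_dvd_pow _ (by omega)).trans (X_pow_dvd_E_sub_G (7 * K))
  have d2 : (X : ℤ⟦X⟧) ^ K ∣ E - G K := (pow_dvd_pow _ (by omega)).trans (X_pow_dvd_E_sub_G K)
  -- Both sides are compared modulo `X ^ K`, where `E` may be replaced by finite products.
  let q := Ideal.Quotient.mk (Ideal.span {(X : ℂ⟦X⟧) ^ K})
  have hq : ∀ f g : ℂ⟦X⟧, q f = q g ↔ X ^ K ∣ f - g := fun f g => by
    rw [Ideal.Quotient.eq, Ideal.mem_span_singleton]
  rw [← hq]
  have s1 : ∀ i, q (sig (om ^ i) E) = q (sig (om ^ i) (G (7 * K))) := fun i => by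
    rw [hq, ← map_sub]; exact sig_dvd _ d1
  have s2 : q (ι E49) = q (ι (phi (phi (G K)))) := by
    rw [hq, E49, E7, ← map_sub, ← map_sub, ← map_sub]; exact ι_dvd (phi_dvd (phi_dvd d2))
  have s3 : q (ι E7) = q (ι (phi (G K))) := by
    rw [hq, E7, ← map_sub, ← map_sub]; exact ι_dvd (phi_dvd d2)
  have s4 : q (ι E7) = q (ι (phi (G (7 * K)))) := by
    rw [hq, E7, ← map_sub, ← map_sub]; exact ι_dvd (phi_dvd d1)
  have := congrArg q (prod_G K)
  rw [map_mul, map_prod, map_mul, map_mul, map_pow, map_pow] at this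
  rw [map_mul, map_prod, pow_succ', map_mul, map_mul, map_pow, map_pow, s2]
  simp_rw [s1]
  rw [this, ← s4, ← s3]

lemma isRes_tt : IsRes 1 tt := by
  have hd : IsRes 1 (D ^ 4) := by
    have := ((isRes_D.mul isRes_D).mul isRes_D).mul isRes_D
    rwa [show (2 : ZMod 7) + 2 + 2 + 2 = 1 by decide, show D * D * D * D = D ^ 4 by ring] at this
  have h1 : IsRes 1 (ca ^ 3 * cb) := by
    have := ((isRes_ca.mul isRes_ca).mul isRes_ca).mul isRes_cb
    rwa [show (0 : ZMod 7) + 0 + 0 + 1 = 1 by decide, show ca * ca * ca = ca ^ 3 by ring] at this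
  have h2 : IsRes 1 (cb ^ 3 * cc) := by
    have := ((isRes_cb.mul isRes_cb).mul isRes_cb).mul isRes_cc
    rwa [show (1 : ZMod 7) + 1 + 1 + 5 = 1 by decide, show cb * cb * cb = cb ^ 3 by ring] at this
  have h3 : IsRes 1 (cc ^ 3 * ca) := by
    have := ((isRes_cc.mul isRes_cc).mul isRes_cc).mul isRes_ca
    rwa [show (5 : ZMod 7) + 5 + 5 + 0 = 1 by decide, show cc * cc * cc = cc ^ 3 by ring] at this
  intro n hn
  rw [tt, show (8 : ℤ⟦X⟧) = C 8 by simp, map_sub, coeff_C_mul, map_neg, map_add, map_add,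
    h1 n hn, h2 n hn, h3 n hn, hd n hn]
  simp

lemma constantCoeff_E : constantCoeff E = 1 := by
  obtain ⟨g, hg⟩ := X_pow_dvd_E_sub_G 0
  have : E = 1 + X * g := by
    rw [← sub_eq_iff_eq_add']
    simpa [G] using hg
  rw [this]; simp

lemma phi_injective : Function.Injective phi := by
  intro f g h
  ext n
  have := congrArg (coeff (7 * n)) h
  simpa [coeff_phi] using this

lemma E_ne_zero : E ≠ 0 := fun h => by simpa [h] using constantCoeff_E
lemma E7_ne_zero : E7 ≠ 0 := (map_ne_zero_iff _ phi_injective).2 E_ne_zero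
lemma E49_ne_zero : E49 ≠ 0 := (map_ne_zero_iff _ phi_injective).2 E7_ne_zero
lemma D_ne_zero : D ≠ 0 := mul_ne_zero (pow_ne_zero _ X_ne_zero) E49_ne_zero

/-- The modular equation `modular_eq` as a polynomial of degree 7 in the unknown `E`, over complex power
series. -/
noncomputable def FF : Polynomial ℂ⟦X⟧ :=
  let d := Polynomial.C (ι D)
  let t := Polynomial.C (ι tt)
  d * Polynomial.X ^ 7 + 7 * d ^ 2 * Polynomial.X ^ 6 + 21 * d ^ 3 * Polynomial.X ^ 5 + 49 * d ^ 4 * Polynomial.X ^ 4 +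
    (147 * d ^ 5 + 7 * t * d) * Polynomial.X ^ 3 + (343 * d ^ 6 + 35 * t * d ^ 2) * Polynomial.X ^ 2 +
    (343 * d ^ 7 + 49 * t * d ^ 3) * Polynomial.X - t ^ 2

lemma natDegree_FF : FF.natDegree = 7 := by
  have : ι D ≠ 0 := (map_ne_zero_iff _ ι_injective).2 D_ne_zero
  rw [FF]
  compute_degree!

lemma leadingCoeff_FF : FF.leadingCoeff = ι D := by
  rw [Polynomial.leadingCoeff, natDegree_FF, FF]
  compute_degree!

/-- The roots of `FF`: the series `ω^{-2i} E(ω^i q)`, with `ω^{-2i}` written as `ω^{5i}`. -/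
noncomputable def rr (i : ℕ) : ℂ⟦X⟧ := C (om ^ i) ^ 5 * sig (om ^ i) E

/-- The substitution `q ↦ w q` multiplies `D` by `w²` and `tt` by `w`, so it carries the modular
equation for `E` to one for `w⁻² E(w q)` with the original `D` and `tt`. -/
lemma eval_FF (i : ℕ) : FF.eval (rr i) = 0 := by
  set w := C (om ^ i) with hw
  have hw7 : (om ^ i) ^ 7 = 1 := by
    rw [← pow_mul, mul_comm, pow_mul, om_prim.pow_eq_one, one_pow]
  have w7 : w ^ 7 = 1 := by rw [hw, ← map_pow, hw7, map_one]
  have w0 : w ≠ 0 := by rintro h; rw [h] at w7; norm_num at w7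
  have h := congrArg (sig (om ^ i)) modular_eq
  have hE : sig (om ^ i) E = w ^ 2 * rr i := by
    rw [rr, ← mul_assoc, ← pow_add, w7, one_mul]
  have hD := sig_of_isRes hw7 (r := 2) isRes_D
  have ht := sig_of_isRes hw7 (r := 1) (by simpa using isRes_tt)
  rw [map_pow, ← hw] at hD ht
  simp only [map_add, map_mul, map_pow, map_ofNat, hE, hD, ht] at h
  have h9 : w ^ 9 = w ^ 2 := by rw [show 9 = 7 + 2 by rfl, pow_add, w7, one_mul]
  have h16 : w ^ 16 = w ^ 2 := by rw [show 16 = 7 + 9 by rfl, pow_add, w7, one_mul, h9]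
  refine (mul_eq_zero.1 (?_ : w ^ 2 * _ = 0)).resolve_left (pow_ne_zero 2 w0)
  simp only [FF, Polynomial.eval_add, Polynomial.eval_sub, Polynomial.eval_mul,
    Polynomial.eval_pow, Polynomial.eval_C, Polynomial.eval_X, Polynomial.eval_ofNat]
  generalize rr i = r at *
  generalize ι D = d at *
  generalize ι tt = t at *
  linear_combination -h - (t * (7 * r ^ 3 * d + 35 * r ^ 2 * d ^ 2 + 49 * r * d ^ 3)) * h9 -
    (r ^ 7 * d + 7 * r ^ 6 * d ^ 2 + 21 * r ^ 5 * d ^ 3 + 49 * r ^ 4 * d ^ 4 + 147 * r ^ 3 * d ^ 5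
      + 343 * r ^ 2 * d ^ 6 + 343 * r * d ^ 7) * h16

lemma rr_injOn : Set.InjOn rr (Finset.range 7) := by
  intro i hi j hj hij
  have h := congrArg (constantCoeff (R := ℂ)) hij
  have hE : ∀ i, constantCoeff (sig (om ^ i) E) = 1 := fun i => by
    rw [← coeff_zero_eq_constantCoeff_apply, coeff_sig, coeff_zero_eq_constantCoeff_apply,
      constantCoeff_E]
    simp
  simp only [rr, map_mul, map_pow, hE, constantCoeff_C, mul_one] at h
  have h5 : IsPrimitiveRoot (om ^ 5) 7 := om_prim.pow_of_coprime 5 (by norm_num)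
  rw [← pow_mul, ← pow_mul, mul_comm i, pow_mul, mul_comm j, pow_mul] at h
  exact h5.pow_inj (by simpa using hi) (by simpa using hj) h

/-- Vieta's formula for the product of the seven roots of `FF`. -/
lemma tt_sq_prod : ι tt ^ 2 = ι D * ∏ i ∈ Finset.range 7, sig (om ^ i) E := by
  classical
  have h0 : FF ≠ 0 := fun h => by simpa [h] using natDegree_FF
  have hr : FF.roots = ((Finset.range 7).image rr).val := by
    apply Polynomial.roots_eq_of_natDegree_le_card_of_ne_zero _ _ h0
    · intro x hx
      obtain ⟨i, -, rfl⟩ := Finset.mem_image.1 hx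
      exact eval_FF i
    · rw [Finset.card_image_of_injOn rr_injOn, natDegree_FF, Finset.card_range]
  have h := FF.C_leadingCoeff_mul_prod_multiset_X_sub_C (by
    rw [hr, Finset.card_val, Finset.card_image_of_injOn rr_injOn, natDegree_FF, Finset.card_range])
  rw [hr, leadingCoeff_FF, Finset.prod_map_val, Finset.prod_image rr_injOn] at h
  have h := congrArg (Polynomial.eval 0) h
  have e0 : FF.eval 0 = -ι tt ^ 2 := by simp [FF]
  rw [e0, Polynomial.eval_mul, Polynomial.eval_prod, Polynomial.eval_C] at h
  simp only [Polynomial.eval_sub, Polynomial.eval_X, Polynomial.eval_C] at h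
  have h3 : ∏ i ∈ Finset.range 7, (C (om ^ i) ^ 5 : ℂ⟦X⟧) = 1 := by
    rw [Finset.prod_pow, ← map_prod, Finset.prod_pow_eq_pow_sum]
    rw [show ∑ i ∈ Finset.range 7, i = 7 * 3 by decide, pow_mul, om_prim.pow_eq_one]
    simp
  simp only [zero_sub, Finset.prod_neg, Finset.card_range, rr, Finset.prod_mul_distrib, h3] at h
  linear_combination h

lemma tt_sq : tt ^ 2 = (X * E7 ^ 4) ^ 2 := by
  apply mul_right_cancel₀ E49_ne_zero
  apply ι_injective
  rw [map_mul, map_pow, tt_sq_prod, mul_assoc, prod_sig_E, ← map_mul, D]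
  congr 1
  ring

/-- The value of `tt`. The square is known, and the sign is read off from the coefficient of `q`. -/
lemma tt_eq : tt = X * E7 ^ 4 := by
  rcases sq_eq_sq_iff_eq_or_eq_neg.1 tt_sq with h | h
  · exact h
  exfalso
  have hE1 : coeff 1 E = -1 := by
    have h := X_pow_dvd_iff.1 (X_pow_dvd_E_sub_G 1) 1 (by norm_num)
    rw [map_sub, sub_eq_zero] at h
    rw [h]
    simp [G, coeff_one]
  obtain ⟨u, hu⟩ : X ∣ ca - 1 := by
    rw [X_dvd_iff, map_sub, map_one, sub_eq_zero, ← coeff_zero_eq_constantCoeff_apply, ca,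
      coeff_comp, coeff_zero_eq_constantCoeff_apply, constantCoeff_E]
    simp
  obtain ⟨v, hv⟩ : X ^ 2 ∣ cb + X := by
    rw [X_pow_dvd_iff]
    intro m hm
    interval_cases m
    · simp +decide [cb]
    · simp [cb, coeff_comp, hE1]
  obtain ⟨w, hw⟩ : X ^ 2 ∣ cc := by
    rw [X_pow_dvd_iff]
    intro m hm
    interval_cases m <;> simp +decide [cc, coeff_comp]
  obtain ⟨z, hz⟩ : X ∣ E7 - 1 := by
    rw [X_dvd_iff, map_sub, map_one, sub_eq_zero, ← coeff_zero_eq_constantCoeff_apply, E7,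
      coeff_phi, coeff_zero_eq_constantCoeff_apply, constantCoeff_E]
    simp
  rw [sub_eq_iff_eq_add] at hu hz
  rw [← eq_sub_iff_add_eq] at hv
  rw [tt, D, hu, hv, hw, hz] at h
  -- The negative sign would force `q ≡ -q` modulo `q²`.
  have key : 2 * X = X ^ 2 * (-(X ^ 3 * z ^ 4 + 4 * X ^ 2 * z ^ 3 + 6 * X * z ^ 2 + 4 * z) + v +
      (X ^ 2 * u ^ 3 + 3 * X * u ^ 2 + 3 * u) * (X * v - 1) + (X ^ 2 * v - X) ^ 3 * w +
      X ^ 4 * w ^ 3 * (X * u + 1) + 8 * X ^ 6 * E49 ^ 4) := by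
    linear_combination h
  have h1 := X_pow_dvd_iff.1 ⟨_, key⟩ 1 (by norm_num)
  rw [show (2 : ℤ⟦X⟧) = C 2 by simp, coeff_C_mul] at h1
  simp at h1

/-! ### The partition generating function and the operator `U` -/

section Partition
open PowerSeries.WithPiTopology

/-- The generating function of the partition numbers. -/
noncomputable def P : ℤ⟦X⟧ := mk fun n => (Fintype.card (Nat.Partition n) : ℤ)

lemma coeff_P (n : ℕ) : coeff n P = (Fintype.card (Nat.Partition n) : ℤ) := coeff_mk _ _

/-- Euler's product formula for the partition generating function. -/
lemma E_mul_P : E * P = 1 := by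
  -- The discrete topology on `ℤ` gives meaning to the infinite products of power series.
  let : TopologicalSpace ℤ := ⊥
  have : DiscreteTopology ℤ := ⟨rfl⟩
  have h1 := Nat.Partition.hasProd_powerSeriesMk_card_restricted ℤ (fun _ => True)
  have h2 := hasProd_one_sub_X_pow ℤ
  have h3 := h1.mul h2
  have h4 : ∀ i : ℕ, (if True then ∑' j : ℕ, (X : ℤ⟦X⟧) ^ ((i + 1) * j) else 1) *
      (1 - X ^ (i + 1)) = 1 := fun i => by
    simp_rw [if_true, pow_mul]
    exact tsum_pow_mul_one_sub_of_constantCoeff_eq_zero (by simp)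
  simp_rw [h4] at h3
  have h5 := h3.unique hasProd_one
  rw [mul_comm, ← h5]
  congr 1
  ext n
  simp [P, Nat.Partition.restricted]
end Partition

/-- The operator `∑ aₙ qⁿ ↦ ∑ a₇ₙ qⁿ`. -/
noncomputable def U : ℤ⟦X⟧ →+ ℤ⟦X⟧ where
  toFun f := mk fun n => coeff (7 * n) f
  map_zero' := by ext; simp
  map_add' f g := by ext n; simp

lemma coeff_U (f : ℤ⟦X⟧) (n : ℕ) : coeff n (U f) = coeff (7 * n) f :=
  coeff_mk n (fun n => coeff (7 * n) f)

lemma phi_U (f : ℤ⟦X⟧) : phi (U f) = comp 0 f := by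
  ext n
  rw [coeff_phi, coeff_comp]
  simp only [ZMod.natCast_eq_zero_iff]
  split_ifs with h
  · rw [coeff_U, Nat.mul_div_cancel' h]
  · rfl

/-- `U` is linear over power series in `q⁷`. -/
lemma U_phi_mul (f g : ℤ⟦X⟧) : U (phi f * g) = f * U g := by
  apply phi_injective
  rw [map_mul phi, phi_U, phi_U, comp_mul (u := 0) (isRes_phi f) g (by decide)]

/-- `P(q⁷)`. -/
noncomputable def P7 : ℤ⟦X⟧ := phi P

lemma E7_mul_P7 : E7 * P7 = 1 := by rw [E7, P7, ← map_mul, E_mul_P, map_one]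

/-- `q² E(q⁴⁹) / E(q)`, a modular function of level 49. -/
noncomputable def X1 : ℤ⟦X⟧ := D * P

/-- `q (E(q⁷) / E(q))⁴`, a Hauptmodul of level 7. -/
noncomputable def Y1 : ℤ⟦X⟧ := X * E7 ^ 4 * P ^ 4

/-- `Y1(q⁷)`. -/
noncomputable def Y : ℤ⟦X⟧ := X ^ 7 * E49 ^ 4 * P7 ^ 4

lemma phi_Y1 : phi Y1 = Y := by
  rw [Y1, Y, map_mul, map_mul, map_pow, map_pow, phi_X, P7, E49]

lemma P_ne_zero : P ≠ 0 := right_ne_zero_of_mul_eq_one E_mul_P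

lemma Y1_ne_zero : Y1 ≠ 0 :=
  mul_ne_zero (mul_ne_zero X_ne_zero (pow_ne_zero _ E7_ne_zero)) (pow_ne_zero _ P_ne_zero)

lemma X1_pow_four : X1 ^ 4 = Y * Y1 := by
  have h : E7 ^ 4 * P7 ^ 4 = 1 := by rw [← mul_pow, E7_mul_P7, one_pow]
  rw [X1, Y, Y1, D]
  linear_combination (-X ^ 8 * E49 ^ 4 * P ^ 4) * h

lemma Y_mul_tt : Y * tt = D ^ 4 := by
  have h : E7 ^ 4 * P7 ^ 4 = 1 := by rw [← mul_pow, E7_mul_P7, one_pow]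
  rw [tt_eq, Y, D]
  linear_combination (X ^ 8 * E49 ^ 4) * h

/-- The modular equation in terms of `X1 = D / E` and `Y`: it expresses `X1 ^ 7` through lower powers of `X1`
with coefficients in power series in `q⁷`. -/
lemma modular_X1 : X1 ^ 7 = Y * (7 * X1 ^ 4 + 35 * X1 ^ 5 + 49 * X1 ^ 6) +
    Y ^ 2 * (1 + 7 * X1 + 21 * X1 ^ 2 + 49 * X1 ^ 3 + 147 * X1 ^ 4 + 343 * X1 ^ 5
      + 343 * X1 ^ 6) := by
  have e : ∀ k : ℕ, E ^ k * P ^ k = 1 := fun k => by rw [← mul_pow, E_mul_P, one_pow]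
  apply mul_left_cancel₀ D_ne_zero
  rw [X1]
  linear_combination (Y ^ 2 * P ^ 7) * modular_eq - (Y * tt + D ^ 4) * P ^ 7 * Y_mul_tt +
    Y * P ^ 7 * (7 * E ^ 3 * D + 35 * E ^ 2 * D ^ 2 + 49 * E * D ^ 3) * Y_mul_tt +
    Y * D ^ 4 * (7 * D * P ^ 4 * e 3 + 35 * D ^ 2 * P ^ 5 * e 2 + 49 * D ^ 3 * P ^ 6 * e 1) +
    Y ^ 2 * (D * e 7 + 7 * D ^ 2 * P * e 6 + 21 * D ^ 3 * P ^ 2 * e 5 + 49 * D ^ 4 * P ^ 3 * e 4 +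
      147 * D ^ 5 * P ^ 4 * e 3 + 343 * D ^ 6 * P ^ 5 * e 2 + 343 * D ^ 7 * P ^ 6 * e 1)

/-! ### A recurrence for the action of `U` -/

/-- The multiplier `Y² X1⁻⁶`, written without negative powers (see `Z_mul_X1`). -/
noncomputable def Z : ℤ⟦X⟧ := X ^ 2 * E49 ^ 2 * P7 ^ 8 * E ^ 6

/-- `Y² X1^{s-6}`. Starting the exponent of `X1` at `-6` gives initial values of the recurrence `U_W_add`
that only involve the powers `E⁰, …, E⁶`. -/
noncomputable def W (s : ℕ) : ℤ⟦X⟧ := Z * X1 ^ s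

lemma Z_mul_X1 : Z * X1 ^ 6 = Y ^ 2 := by
  have e : E ^ 6 * P ^ 6 = 1 := by rw [← mul_pow, E_mul_P, one_pow]
  rw [Z, X1, Y, D]
  linear_combination (X ^ 14 * E49 ^ 8 * P7 ^ 8) * e

lemma W_add (s : ℕ) : W (s + 7) = phi (7 * Y1) * W (s + 4) + phi (35 * Y1) * W (s + 5) +
    phi (49 * Y1) * W (s + 6) + phi (Y1 ^ 2) * W s + phi (7 * Y1 ^ 2) * W (s + 1) +
    phi (21 * Y1 ^ 2) * W (s + 2) + phi (49 * Y1 ^ 2) * W (s + 3) +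
    phi (147 * Y1 ^ 2) * W (s + 4) + phi (343 * Y1 ^ 2) * W (s + 5) +
    phi (343 * Y1 ^ 2) * W (s + 6) := by
  simp only [map_mul, map_pow, phi_Y1, map_ofNat, W]
  linear_combination Z * X1 ^ s * modular_X1

lemma U_W_add (s : ℕ) : U (W (s + 7)) = 7 * Y1 * U (W (s + 4)) + 35 * Y1 * U (W (s + 5)) +
    49 * Y1 * U (W (s + 6)) + Y1 ^ 2 * U (W s) + 7 * Y1 ^ 2 * U (W (s + 1)) +
    21 * Y1 ^ 2 * U (W (s + 2)) + 49 * Y1 ^ 2 * U (W (s + 3)) +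
    147 * Y1 ^ 2 * U (W (s + 4)) + 343 * Y1 ^ 2 * U (W (s + 5)) +
    343 * Y1 ^ 2 * U (W (s + 6)) := by
  rw [W_add]
  simp only [map_add U, U_phi_mul]

/-- A power of `q` times a power series in `q⁷` is supported on one residue class. -/
lemma isRes_aux (k a b : ℕ) : IsRes k (X ^ k * E49 ^ a * P7 ^ b) := by
  have := (isRes_X_pow k).mul (isRes_phi (E7 ^ a * P ^ b))
  rwa [add_zero, map_mul, map_pow, map_pow, ← mul_assoc] at this

/-- For `s ≤ 6`, `W s` is `E ^ (6 - s)` times a factor supported on one class modulo 7, so that `U (W s)`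
reduces to one component of `E ^ (6 - s)`. -/
lemma U_W_aux {s i : ℕ} {h : ℤ⟦X⟧} {r : ZMod 7} (hs : s + i = 6) (hc : comp r (E ^ i) = h)
    (hr : ((2 + 2 * s : ℕ) : ZMod 7) + r = 0) :
    phi (U (W s)) = X ^ (2 + 2 * s) * E49 ^ (2 + s) * P7 ^ 8 * h := by
  have e : E ^ s * P ^ s = 1 := by rw [← mul_pow, E_mul_P, one_pow]
  have : W s = X ^ (2 + 2 * s) * E49 ^ (2 + s) * P7 ^ 8 * E ^ i := by
    rw [W, Z, X1, D, show E ^ 6 = E ^ s * E ^ i by rw [← hs, pow_add]]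
    linear_combination (X ^ (2 + 2 * s) * E49 ^ (2 + s) * P7 ^ 8 * E ^ i) * e
  rw [phi_U, this, comp_mul (isRes_aux _ _ _) _ hr.symm, hc]

lemma comp_one : comp 0 (E ^ 0) = 1 := by
  rw [pow_zero, ← map_one phi, comp_of_isRes (isRes_phi 1)]

lemma comp_E_pow_two : comp 4 (E ^ 2) = D ^ 2 := by
  rw [sq, comp_E_mul_4, comp_E_3, comp_E_4, comp_E_6, comp_two_E]
  ring

lemma U_W_6 : U (W 6) = Y1 ^ 2 := by
  apply phi_injective
  rw [U_W_aux (i := 0) rfl comp_one (by decide), map_pow, phi_Y1, Y]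
  ring

lemma U_W_5 : U (W 5) = -Y1 ^ 2 := by
  apply phi_injective
  rw [U_W_aux (i := 1) (h := -D) rfl (by rw [pow_one]; exact comp_two_E) (by decide), map_neg, map_pow,
    phi_Y1, Y, D]
  ring

lemma U_W_4 : U (W 4) = Y1 ^ 2 := by
  apply phi_injective
  rw [U_W_aux (i := 2) rfl comp_E_pow_two (by decide), map_pow, phi_Y1, Y, D]
  ring

lemma U_W_3 : U (W 3) = -7 * Y1 ^ 2 := by
  apply phi_injective
  rw [U_W_aux (i := 3) rfl comp_six_E_cube (by decide), map_mul, map_neg, map_ofNat, map_pow,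
    phi_Y1, Y, D]
  ring

lemma U_W_2 : U (W 2) = -4 * Y1 - 7 * Y1 ^ 2 := by
  have h : E7 ^ 4 * P7 ^ 4 = 1 := by rw [← mul_pow, E7_mul_P7, one_pow]
  apply phi_injective
  rw [U_W_aux (i := 4) rfl comp_E_pow_four (by decide), map_sub, map_mul, map_mul, map_neg,
    map_ofNat, map_ofNat, map_pow, phi_Y1, tt_eq, Y, D]
  linear_combination (-4 * X ^ 7 * E49 ^ 4 * P7 ^ 4) * h

lemma U_W_1 : U (W 1) = 10 * Y1 + 49 * Y1 ^ 2 := by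
  have h : E7 ^ 4 * P7 ^ 4 = 1 := by rw [← mul_pow, E7_mul_P7, one_pow]
  apply phi_injective
  rw [U_W_aux (i := 5) rfl comp_E_pow_five (by decide), map_add, map_mul, map_mul,
    map_ofNat, map_ofNat, map_pow, phi_Y1, tt_eq, Y, D]
  linear_combination (10 * X ^ 7 * E49 ^ 4 * P7 ^ 4) * h

lemma U_W_0 : U (W 0) = 49 * Y1 ^ 2 := by
  apply phi_injective
  rw [U_W_aux (i := 6) rfl comp_E_pow_six (by decide), map_mul,
    map_ofNat, map_pow, phi_Y1, Y, D]
  ring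

/-! ### Divisibility by powers of 7 -/

/-- The ℤ-span of the elements `7 ^ v j * Y1 ^ j` with `p j`. -/
noncomputable def Lat (p : ℕ → Prop) (v : ℕ → ℕ) : AddSubgroup ℤ⟦X⟧ :=
  AddSubgroup.closure {x | ∃ j, p j ∧ x = 7 ^ v j * Y1 ^ j}

lemma basis_mem_Lat {p : ℕ → Prop} {v : ℕ → ℕ} {j : ℕ} (h : p j) : 7 ^ v j * Y1 ^ j ∈ Lat p v :=
  AddSubgroup.subset_closure ⟨j, h, rfl⟩

lemma mul_mem_Lat {p q : ℕ → Prop} {v w : ℕ → ℕ} {f g : ℤ⟦X⟧} (hf : f ∈ Lat p v) (c : ℤ) (e a : ℕ)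
    (hg : g = (c : ℤ⟦X⟧) * 7 ^ e * Y1 ^ a)
    (h : ∀ j, p j → q (j + a) ∧ w (j + a) ≤ v j + e) :
    g * f ∈ Lat q w := by
  subst hg
  induction hf using AddSubgroup.closure_induction with
  | mem x hx =>
    obtain ⟨j, hj, rfl⟩ := hx
    obtain ⟨h1, h2⟩ := h j hj
    obtain ⟨d, hd⟩ := Nat.exists_eq_add_of_le h2
    have : (c : ℤ⟦X⟧) * 7 ^ e * Y1 ^ a * (7 ^ v j * Y1 ^ j) =
        (c * 7 ^ d) • (7 ^ w (j + a) * Y1 ^ (j + a)) := by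
      rw [zsmul_eq_mul]
      push_cast
      have h7 : (7 : ℤ⟦X⟧) ^ v j * 7 ^ e = 7 ^ w (j + a) * 7 ^ d := by rw [← pow_add, hd, pow_add]
      linear_combination c * Y1 ^ a * Y1 ^ j * h7
    rw [this]
    exact zsmul_mem (basis_mem_Lat h1) _
  | zero => rw [mul_zero]; exact zero_mem _
  | add x y _ _ hx hy => rw [mul_add]; exact add_mem hx hy
  | neg x _ hx => rw [mul_neg]; exact neg_mem hx

/-- Division by `Y1 ^ a` inside the lattices. -/
lemma cancel_Lat {p q : ℕ → Prop} {v w : ℕ → ℕ} {f : ℤ⟦X⟧} (a : ℕ) (hf : Y1 ^ a * f ∈ Lat p v)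
    (h : ∀ j, p j → ∃ i, j = i + a ∧ q i ∧ w i ≤ v j) : f ∈ Lat q w := by
  have : ∀ g ∈ Lat p v, ∃ f ∈ Lat q w, g = Y1 ^ a * f := by
    intro g hg
    induction hg using AddSubgroup.closure_induction with
    | mem x hx =>
      obtain ⟨j, hj, rfl⟩ := hx
      obtain ⟨i, rfl, h1, h2⟩ := h j hj
      obtain ⟨d, hd⟩ := Nat.exists_eq_add_of_le h2
      refine ⟨(7 ^ d : ℤ) • (7 ^ w i * Y1 ^ i),
        zsmul_mem (basis_mem_Lat h1) _, ?_⟩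
      rw [zsmul_eq_mul, hd]
      push_cast
      ring
    | zero => exact ⟨0, zero_mem _, by simp⟩
    | add x y _ _ hx hy =>
      obtain ⟨f, hf, rfl⟩ := hx
      obtain ⟨g, hg, rfl⟩ := hy
      exact ⟨f + g, add_mem hf hg, by ring⟩
    | neg x _ hx =>
      obtain ⟨f, hf, rfl⟩ := hx
      exact ⟨-f, neg_mem hf, by ring⟩
  obtain ⟨g, hg, h2⟩ := this _ hf
  rwa [mul_left_cancel₀ (pow_ne_zero _ Y1_ne_zero) h2]

lemma monomial_mem_Lat {q : ℕ → Prop} {w : ℕ → ℕ} {g : ℤ⟦X⟧} (c : ℤ) (e a : ℕ)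
    (hg : g = (c : ℤ⟦X⟧) * 7 ^ e * Y1 ^ a) (h : q a ∧ w a ≤ e) : g ∈ Lat q w := by
  have h0 : 7 ^ 0 * Y1 ^ 0 ∈ Lat (· = 0) (fun _ => 0) :=
    basis_mem_Lat (p := (· = 0)) (v := fun _ => 0) rfl
  simpa using mul_mem_Lat h0 c e a hg (by rintro j rfl; simpa using h)

/-- The lattice containing `U (W s)`. The exponents use truncated subtraction, so `v j = 0` whenever
`7 j < 2 s + 7`. -/
noncomputable def LL (s : ℕ) : AddSubgroup ℤ⟦X⟧ :=
  Lat (fun j => 2 * s + 2 ≤ 7 * j) (fun j => (7 * j - 2 * s - 3) / 4)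

/-- The 7-adic estimate for `U (W s)`. The recurrence `U_W_add` propagates it because each of its
coefficients is divisible by a sufficient power of 7. -/
lemma U_W_mem (s : ℕ) : U (W s) ∈ LL s := by
  induction s using Nat.strong_induction_on with
  | _ s ih =>
    by_cases hs : s < 7
    · interval_cases s
      · rw [U_W_0]
        exact monomial_mem_Lat 1 2 2 (by push_cast; ring) (by norm_num)
      · rw [U_W_1]
        exact add_mem (monomial_mem_Lat 10 0 1 (by push_cast; ring) (by norm_num))
          (monomial_mem_Lat 1 2 2 (by push_cast; ring) (by norm_num))
      · rw [U_W_2]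
        exact sub_mem (monomial_mem_Lat (-4) 0 1 (by push_cast; ring) (by norm_num))
          (monomial_mem_Lat 1 1 2 (by push_cast; ring) (by norm_num))
      · rw [U_W_3]
        exact monomial_mem_Lat (-1) 1 2 (by push_cast; ring) (by norm_num)
      · rw [U_W_4]
        exact monomial_mem_Lat 1 0 2 (by push_cast; ring) (by norm_num)
      · rw [U_W_5]
        exact monomial_mem_Lat (-1) 0 2 (by push_cast; ring) (by norm_num)
      · rw [U_W_6]
        exact monomial_mem_Lat 1 0 2 (by push_cast; ring) (by norm_num)
    · obtain ⟨s, rfl⟩ := Nat.exists_eq_add_of_le' (not_lt.1 hs)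
      rw [U_W_add]
      have h0 := ih s (by omega)
      have h1 := ih (s + 1) (by omega)
      have h2 := ih (s + 2) (by omega)
      have h3 := ih (s + 3) (by omega)
      have h4 := ih (s + 4) (by omega)
      have h5 := ih (s + 5) (by omega)
      have h6 := ih (s + 6) (by omega)
      refine add_mem (add_mem (add_mem (add_mem (add_mem (add_mem (add_mem (add_mem (add_mem
        ?_ ?_) ?_) ?_) ?_) ?_) ?_) ?_) ?_) ?_
      · exact mul_mem_Lat h4 1 1 1 (by push_cast; ring) (fun j hj => by omega)
      · exact mul_mem_Lat h5 5 1 1 (by push_cast; ring) (fun j hj => by omega)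
      · exact mul_mem_Lat h6 1 2 1 (by push_cast; ring) (fun j hj => by omega)
      · exact mul_mem_Lat h0 1 0 2 (by push_cast; ring) (fun j hj => by omega)
      · exact mul_mem_Lat h1 1 1 2 (by push_cast; ring) (fun j hj => by omega)
      · exact mul_mem_Lat h2 3 1 2 (by push_cast; ring) (fun j hj => by omega)
      · exact mul_mem_Lat h3 1 2 2 (by push_cast; ring) (fun j hj => by omega)
      · exact mul_mem_Lat h4 3 2 2 (by push_cast; ring) (fun j hj => by omega)
      · exact mul_mem_Lat h5 1 3 2 (by push_cast; ring) (fun j hj => by omega)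
      · exact mul_mem_Lat h6 1 3 2 (by push_cast; ring) (fun j hj => by omega)

/-- `Y1 ^ j = Y^{-j} X1^{4j}` reduces `U (Y1 ^ j)` to the estimate for `U ∘ W`. -/
lemma U_Y1_pow (j : ℕ) : Y1 ^ (j + 2) * U (Y1 ^ j) = U (W (4 * j + 6)) := by
  rw [← U_phi_mul, map_pow, phi_Y1, W, add_comm (4 * j), pow_add X1, ← mul_assoc Z, Z_mul_X1, pow_mul,
    X1_pow_four]
  congr 1
  ring

/-- `X1 * Y1 ^ j = Y^{-j} X1^{4j+1}` reduces `U (X1 * Y1 ^ j)` to the estimate for `U ∘ W`. -/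
lemma U_X1_Y1_pow (j : ℕ) : Y1 ^ (j + 2) * U (X1 * Y1 ^ j) = U (W (4 * j + 7)) := by
  rw [← U_phi_mul, map_pow, phi_Y1, W, show 4 * j + 7 = 6 + 4 * j + 1 by ring, pow_succ X1,
    pow_add X1, ← mul_assoc Z, ← mul_assoc Z, Z_mul_X1, pow_mul, X1_pow_four]
  congr 1
  ring

/-- Integral combinations of the `Y1 ^ j`, `j ≥ 1`, with coefficients divisible by
`7 ^ (b + ⌊(7j - 7) / 4⌋)`. It contains `E(q⁷) Q (b - 1)` for `b ≥ 1`. -/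
noncomputable def OddLat (b : ℕ) : AddSubgroup ℤ⟦X⟧ :=
  Lat (fun j => 1 ≤ j) (fun j => b + (7 * j - 7) / 4)

/-- Integral combinations of the `Y1 ^ j`, `j ≥ 1`, with coefficients divisible by
`7 ^ (b + ⌊(7j - 6) / 4⌋)`. It receives `OddLat (b - 1)` under `U` for `b ≥ 1`. -/
noncomputable def EvenLat (b : ℕ) : AddSubgroup ℤ⟦X⟧ :=
  Lat (fun j => 1 ≤ j) (fun j => b + (7 * j - 6) / 4)

lemma map_mem_of_basis {p : ℕ → Prop} {v : ℕ → ℕ} {f : ℤ⟦X⟧} (hf : f ∈ Lat p v)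
    (T : ℤ⟦X⟧ →+ ℤ⟦X⟧) (A : AddSubgroup ℤ⟦X⟧)
    (h : ∀ j, p j → T ((7 ^ v j : ℤ) • Y1 ^ j) ∈ A) : T f ∈ A := by
  have : Lat p v ≤ A.comap T := by
    rw [Lat, AddSubgroup.closure_le]
    rintro x ⟨j, hj, rfl⟩
    have := h j hj
    rw [zsmul_eq_mul] at this
    push_cast at this
    exact this
  exact this hf

/-- This step gains a factor 7. -/
lemma U_mem_EvenLat {b : ℕ} {f : ℤ⟦X⟧} (hf : f ∈ OddLat b) : U f ∈ EvenLat (b + 1) := by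
  refine map_mem_of_basis hf U _ fun j hj => ?_
  rw [map_zsmul, zsmul_eq_mul]
  have h1 := U_W_mem (4 * j + 6)
  rw [← U_Y1_pow] at h1
  have h2 : U (Y1 ^ j) ∈ Lat (fun i => 1 ≤ i) (fun i => (7 * i - j - 1) / 4) :=
    cancel_Lat _ h1 fun i hi => ⟨i - (j + 2), by omega⟩
  -- `(7 * j - 7) / 4 ≥ j - 1` compensates the loss of `j` in the exponent `(7 * i - j - 1) / 4`.
  have h3 : j - 1 ≤ (7 * j - 7) / 4 := by omega
  refine mul_mem_Lat h2 1 (b + (7 * j - 7) / 4) 0 (by push_cast; ring) (fun i hi => ?_)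
  generalize (7 * j - 7) / 4 = c at h3
  omega

/-- This step preserves the exponent `b`. -/
lemma U_X1_mul_mem_OddLat {b : ℕ} {f : ℤ⟦X⟧} (hf : f ∈ EvenLat b) : U (X1 * f) ∈ OddLat b := by
  refine map_mem_of_basis hf (U.comp (AddMonoidHom.mulLeft X1)) _ fun j hj => ?_
  rw [map_zsmul, zsmul_eq_mul]
  have h1 := U_W_mem (4 * j + 7)
  rw [← U_X1_Y1_pow] at h1
  have h2 : U (X1 * Y1 ^ j) ∈ Lat (fun i => 1 ≤ i) (fun i => (7 * i - j - 3) / 4) :=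
    cancel_Lat _ h1 fun i hi => ⟨i - (j + 2), by omega⟩
  exact mul_mem_Lat h2 1 (b + (7 * j - 6) / 4) 0 (by push_cast; ring)
    (fun i hi => by omega)

lemma U_X1_mem : U X1 ∈ OddLat 1 := by
  have h1 := U_W_mem (4 * 0 + 7)
  rw [← U_X1_Y1_pow, pow_zero, mul_one] at h1
  exact cancel_Lat _ h1 fun i hi => ⟨i - 2, by omega⟩

/-! ### Iteration and conclusion -/

/-- The generating function of `p` along the residue class `24⁻¹` modulo `7 ^ (2b + 1)`. The shift `q²` is
the index shift needed in each odd step; in the even steps none is needed. -/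
noncomputable def Q : ℕ → ℤ⟦X⟧
  | 0 => U (X ^ 2 * P)
  | b + 1 => U (X ^ 2 * U (Q b))

/-- Watson's induction: `E(q⁷) Q b` is obtained from `U X1` by applying `f ↦ U (X1 * U f)` repeatedly. -/
lemma E7_mul_Q_mem (b : ℕ) : E7 * Q b ∈ OddLat (b + 1) := by
  induction b with
  | zero =>
    have h : U X1 = E7 * Q 0 := by
      rw [Q, ← U_phi_mul, X1, D, E49]
      congr 1
      ring
    rw [← h]
    exact U_X1_mem
  | succ b ih =>
    have h := U_X1_mul_mem_OddLat (U_mem_EvenLat ih)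
    have e : X1 * U (E7 * Q b) = phi E7 * (X ^ 2 * U (Q b)) := by
      rw [E7, U_phi_mul, X1, D, E49, E7]
      linear_combination (X ^ 2 * phi (phi E) * U (Q b)) * E_mul_P
    rwa [e, U_phi_mul] at h

lemma seven_pow_dvd_Q (b : ℕ) : 7 ^ (b + 1) ∣ Q b := by
  have h : ∀ f ∈ OddLat (b + 1), (7 : ℤ⟦X⟧) ^ (b + 1) ∣ f := by
    intro f hf
    induction hf using AddSubgroup.closure_induction with
    | mem x hx =>
      obtain ⟨j, hj, rfl⟩ := hx
      exact ((pow_dvd_pow _ (by dsimp only; omega)).mul_right _)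
    | zero => exact dvd_zero _
    | add x y _ _ hx hy => exact dvd_add hx hy
    | neg x _ hx => exact (dvd_neg).2 hx
  have h1 := (h _ (E7_mul_Q_mem b)).mul_left P7
  rwa [← mul_assoc, mul_comm P7, E7_mul_P7, one_mul] at h1

/-- The hypothesis says `n = 7^{2b+1} m - (7^{2b+2} - 1) / 24`. -/
lemma coeff_Q (b m n : ℕ) (hm : 1 ≤ m) (h : 24 * n + 7 ^ (2 * b + 2) = 24 * 7 ^ (2 * b + 1) * m + 1) :
    coeff m (Q b) = coeff n P := by
  induction b generalizing m with
  | zero =>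
    rw [Q, coeff_U, coeff_X_pow_mul', if_pos (show 2 ≤ 7 * m by omega)]
    norm_num at h
    rw [show 7 * m - 2 = n by omega]
  | succ b ih =>
    rw [Q, coeff_U, coeff_X_pow_mul', if_pos (show 2 ≤ 7 * m by omega), coeff_U]
    apply ih _ (by omega)
    obtain ⟨m, rfl⟩ := Nat.exists_eq_add_of_le' hm
    rw [show 7 * (7 * (m + 1) - 2) = 49 * m + 35 by omega]
    have e1 : 7 ^ (2 * (b + 1) + 2) = 7 ^ (2 * b + 1) * 343 := by ring
    have e2 : 7 ^ (2 * (b + 1) + 1) = 7 ^ (2 * b + 1) * 49 := by ring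
    have e3 : 7 ^ (2 * b + 2) = 7 ^ (2 * b + 1) * 7 := by ring
    rw [e1, e2] at h
    rw [e3]
    linarith

lemma exists_index (b n : ℕ) (h : 24 * n ≡ 1 [MOD 7 ^ (2 * b + 1)]) :
    ∃ m, 1 ≤ m ∧ 24 * n + 7 ^ (2 * b + 2) = 24 * 7 ^ (2 * b + 1) * m + 1 := by
  have h7 : 7 ^ (2 * b + 1) % 24 = 7 := by
    rw [pow_succ, pow_mul, Nat.mul_mod, Nat.pow_mod]
    norm_num
  have hn : 1 ≤ 24 * n := by
    by_contra hn
    obtain rfl : n = 0 := by omega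
    have := (Nat.modEq_zero_iff_dvd.1 h.symm)
    have h1 := Nat.eq_one_of_dvd_one this
    rw [h1] at h7
    norm_num at h7
  obtain ⟨t, ht⟩ := (Nat.modEq_iff_dvd' hn).1 h.symm
  rw [show 2 * b + 2 = 2 * b + 1 + 1 by ring, pow_succ]
  generalize 7 ^ (2 * b + 1) = N at *
  -- `24 n = N t + 1` with `N ≡ 7` modulo 24, and `7 * 7 ≡ 1`, so `t ≡ -7`.
  have h24 : 24 ∣ t + 7 := by
    have h1 : (N * t) % 24 = (7 * t) % 24 := by rw [Nat.mul_mod, h7, ← Nat.mul_mod_mod]; simp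
    omega
  obtain ⟨m, hm⟩ := h24
  refine ⟨m, by omega, ?_⟩
  have : N * (t + 7) = N * (24 * m) := by rw [hm]
  have h2 : 24 * n = N * t + 1 := by omega
  rw [h2]
  linarith

lemma watson (b n : ℕ) (h : 24 * n ≡ 1 [MOD 7 ^ (2 * b + 1)]) :
    7 ^ (b + 1) ∣ Fintype.card (Nat.Partition n) := by
  obtain ⟨m, hm, h1⟩ := exists_index b n h
  obtain ⟨g, hg⟩ := seven_pow_dvd_Q b
  have h2 := coeff_Q b m n hm h1
  rw [coeff_P, hg, show (7 : ℤ⟦X⟧) ^ (b + 1) = C (7 ^ (b + 1)) by simp, coeff_C_mul] at h2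
  have : (7 ^ (b + 1) : ℤ) ∣ (Fintype.card (Nat.Partition n) : ℤ) := ⟨_, h2.symm⟩
  exact_mod_cast this

end Watson

theorem watson_pow_7 (k : ℕ) (hk : 0 < k) (n : ℕ)
    (h : 24 * n ≡ 1 [MOD 7 ^ (2 * k - 1)]) : partitionCount n ≡ 0 [MOD 7 ^ k] := by
  obtain ⟨b, rfl⟩ := Nat.exists_eq_add_of_le' hk
  have e : 2 * (b + (0 + 1)) - 1 = 2 * b + 1 := by omega
  rw [e] at h
  exact Nat.modEq_zero_iff_dvd.2 (Watson.watson b n h)
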